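/- arXiv:math/0007191 — 2 statements merged into one kernel-verified Lean document; each statement's English description precedes it below -/
import Mathlib

section
/- If β is a non-isotropic imaginary root (i.e. p(β) > 1) belonging to Σ_λ, then every positive integer multiple mβ (m ≥ 1) also belongs to Σ_λ. -/
open scoped BigOperators

noncomputable section

/-- A quiver with a finite vertex set `I` and a finite arrow set `A`;
`h a` and `t a` are the head and the tail of the arrow `a`. -/
structure FinQuiver where
  I : Type
  [fintypeI : Fintype I]
  [decEqI : DecidableEq I]
  A : Type
  [fintypeA : Fintype A]
  h : A → I
  t : A → I

attribute [instance] FinQuiver.fintypeI FinQuiver.decEqI FinQuiver.fintypeA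

namespace FinQuiver

variable (Q : FinQuiver)

/-- Arrows of the double quiver `Q̄` : every arrow `a : i → j` of `Q` (as `Sum.inl a`)
together with a reverse arrow `a* : j → i` (as `Sum.inr a`). -/
@[reducible] def DA : Type := Q.A ⊕ Q.A

instance : Fintype Q.DA := inferInstanceAs (Fintype (Q.A ⊕ Q.A))

/-- Head of an arrow of the double quiver. -/
@[reducible] def dh : Q.DA → Q.I := fun a => match a with
  | Sum.inl a => Q.h a
  | Sum.inr a => Q.t a

/-- Tail of an arrow of the double quiver. -/
@[reducible] def dt : Q.DA → Q.I := fun a => match a with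
  | Sum.inl a => Q.t a
  | Sum.inr a => Q.h a

/-- The symmetric bilinear form
`(α,β) = ∑_{i∈I} 2 α_i β_i − ∑_{a∈Q̄} α_{h(a)} β_{t(a)}` on `ℤ^I`. -/
def bil (α β : Q.I → ℤ) : ℤ :=
  (∑ i, 2 * α i * β i) - ∑ a : Q.DA, α (Q.dh a) * β (Q.dt a)

/-- `p(α) = 1 − q(α) = 1 − α·α + ∑_{a ∈ Q} α_{t(a)} α_{h(a)}`. -/
def pp (α : Q.I → ℤ) : ℤ :=
  1 - (∑ i, α i * α i) + ∑ a : Q.A, α (Q.t a) * α (Q.h a)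

/-- The coordinate vector `ε_i` at a vertex `i`. -/
def ev (i : Q.I) : Q.I → ℤ := fun j => if j = i then 1 else 0

/-- The coordinate vector of a vertex, as a vector of natural numbers. -/
def evN (i : Q.I) : Q.I → ℕ := fun j => if j = i then 1 else 0

/-- A vertex is loopfree if no arrow has both its head and its tail there. -/
def Loopfree (i : Q.I) : Prop := ∀ a : Q.A, ¬ (Q.h a = i ∧ Q.t a = i)

/-- The reflection `s_i(α) = α − (α,ε_i) ε_i` at a (loopfree) vertex `i`. -/
def refl (i : Q.I) (α : Q.I → ℤ) : Q.I → ℤ := α - Q.bil α (Q.ev i) • Q.ev i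

/-- Two vertices are joined by some arrow. -/
def Adj (i j : Q.I) : Prop :=
  ∃ a : Q.A, (Q.h a = i ∧ Q.t a = j) ∨ (Q.h a = j ∧ Q.t a = i)

/-- The quiver is connected. -/
def Connected : Prop := ∀ i j : Q.I, Relation.ReflTransGen Q.Adj i j

/-- The support of the vector `α` is connected in `Q`. -/
def SuppConnected (α : Q.I → ℤ) : Prop :=
  ∀ i j : Q.I, α i ≠ 0 → α j ≠ 0 →
    Relation.ReflTransGen (fun x y => α x ≠ 0 ∧ α y ≠ 0 ∧ Q.Adj x y) i j

/-- The fundamental region: nonzero nonnegative vectors with connected support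
such that `(α, ε_i) ≤ 0` for every vertex `i`. -/
def InFund (α : Q.I → ℤ) : Prop :=
  α ≠ 0 ∧ (∀ i, 0 ≤ α i) ∧ Q.SuppConnected α ∧ ∀ i, Q.bil α (Q.ev i) ≤ 0

/-- The roots of the Kac root system attached to `Q` : the real roots form the orbit
of the simple roots (coordinate vectors at loopfree vertices) under the reflections at
loopfree vertices, and the imaginary roots form the orbit of `±(fundamental region)`
under these reflections. -/
inductive IsRoot : (Q.I → ℤ) → Prop
  | simple (i : Q.I) (hi : Q.Loopfree i) : IsRoot (Q.ev i)
  | fund (α : Q.I → ℤ) (hα : Q.InFund α) : IsRoot α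
  | neg_fund (α : Q.I → ℤ) (hα : Q.InFund α) : IsRoot (-α)
  | reflect (i : Q.I) (hi : Q.Loopfree i) (α : Q.I → ℤ) (hα : IsRoot α) :
      IsRoot (Q.refl i α)

/-- Positive roots: roots all of whose components are nonnegative. -/
def IsPosRoot (α : Q.I → ℤ) : Prop := Q.IsRoot α ∧ (∀ i, 0 ≤ α i) ∧ α ≠ 0

/-- The Tits form is positive semidefinite. -/
def PosSemidef : Prop := ∀ α : Q.I → ℤ, 0 ≤ Q.bil α α

/-- The Tits form is positive definite. -/
def PosDef : Prop := Q.PosSemidef ∧ ∀ α : Q.I → ℤ, Q.bil α α = 0 → α = 0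

/-- Dynkin quivers: connected, with positive definite Tits form. -/
def IsDynkin : Prop := Q.Connected ∧ Q.PosDef

/-- Extended Dynkin quivers: connected, with positive semidefinite but not
positive definite Tits form. -/
def IsExtDynkin : Prop := Q.Connected ∧ Q.PosSemidef ∧ ¬ Q.PosDef

/-- `δ` is the minimal positive imaginary root of an extended Dynkin quiver:
the minimal nonzero nonnegative vector in the radical of the Tits form. -/
def IsMinImag (δ : Q.I → ℤ) : Prop :=
  (∀ i, 0 ≤ δ i) ∧ δ ≠ 0 ∧ (∀ i, Q.bil δ (Q.ev i) = 0) ∧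
    ∀ β : Q.I → ℤ, (∀ i, 0 ≤ β i) → β ≠ 0 → (∀ i, Q.bil β (Q.ev i) = 0) →
      ∀ i, δ i ≤ β i

/-- The subquiver of `Q` on a subset `S` of vertices and a subset `B` of arrows. -/
def restrict (S : Set Q.I) (B : Set Q.A) (hh : ∀ a ∈ B, Q.h a ∈ S)
    (ht : ∀ a ∈ B, Q.t a ∈ S) : FinQuiver :=
  { I := S
    fintypeI := Fintype.ofFinite S
    decEqI := Classical.decEq _
    A := B
    fintypeA := Fintype.ofFinite B
    h := fun a => ⟨Q.h a.1, hh a.1 a.2⟩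
    t := fun a => ⟨Q.t a.1, ht a.1 a.2⟩ }

/-- The support quiver of a vector: the full subquiver on the support of `β`. -/
def suppQuiver (β : Q.I → ℤ) : FinQuiver :=
  Q.restrict {i | β i ≠ 0} {a | β (Q.h a) ≠ 0 ∧ β (Q.t a) ≠ 0}
    (fun _ ha => ha.1) (fun _ ha => ha.2)

/-- A dimension vector (of natural numbers), viewed in `ℤ^I`. -/
def toZ (α : Q.I → ℕ) : Q.I → ℤ := fun i => (α i : ℤ)

/-- An oriented cycle in the double quiver `Q̄`, consisting of `n+1` arrows,
the tail of each arrow being the head of the (cyclically) next one. -/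
structure Cyc (Q' : FinQuiver) where
  n : ℕ
  ar : Fin (n + 1) → Q'.DA
  compat : ∀ i : Fin (n + 1), Q'.dt (ar i) = Q'.dh (ar (i + 1))

section WithField

variable (K : Type) [Field K]

/-- `λ·α = ∑_i λ_i α_i`. -/
def pair (l : Q.I → K) (α : Q.I → ℤ) : K := ∑ i, l i * (α i : K)

/-- `R_λ^+`, the set of positive roots `α` with `λ·α = 0`. -/
def Rplus (l : Q.I → K) : Set (Q.I → ℤ) :=
  {α | Q.IsPosRoot α ∧ Q.pair K l α = 0}

/-- `ℕ R_λ^+`, the set of sums (including the empty sum `0`) of elements of `R_λ^+`. -/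
def NRplus (l : Q.I → K) : Set (Q.I → ℤ) :=
  (AddSubmonoid.closure (Q.Rplus K l) : AddSubmonoid (Q.I → ℤ))

/-- `Σ_λ` : the elements `α ∈ R_λ^+` with `p(α) > ∑ p(β⁽ᵗ⁾)` for every decomposition
of `α` as a sum of at least two elements `β⁽ᵗ⁾` of `R_λ^+`. -/
def SigmaSet (l : Q.I → K) : Set (Q.I → ℤ) :=
  {α | α ∈ Q.Rplus K l ∧
    ∀ (n : ℕ) (β : Fin n → (Q.I → ℤ)), 2 ≤ n → (∀ j, β j ∈ Q.Rplus K l) →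
      α = ∑ j, β j → (∑ j, Q.pp (β j)) < Q.pp α}

/-- The dual reflection `r_i(λ)_j = λ_j − (ε_i,ε_j) λ_i`. -/
def coRefl (i : Q.I) (l : Q.I → K) : Q.I → K :=
  fun j => l j - (Q.bil (Q.ev i) (Q.ev j) : ℤ) * l i

/-- A single admissible reflection applied to the pair `(λ, α)`:
a reflection at a loopfree vertex `i` with `λ_i ≠ 0`. -/
def AdmStep (x y : (Q.I → K) × (Q.I → ℤ)) : Prop :=
  ∃ i : Q.I, Q.Loopfree i ∧ x.1 i ≠ 0 ∧ y.1 = Q.coRefl K i x.1 ∧ y.2 = Q.refl i x.2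

/-- `(ν,β)` is obtained from `(λ,α)` by a sequence of admissible reflections:
the two pairs lie in the same class of the equivalence relation generated by
admissible reflections. -/
def AdmEquiv (x y : (Q.I → K) × (Q.I → ℤ)) : Prop :=
  Relation.EqvGen (Q.AdmStep K) x y

/-- The space `Rep(Q̄,α)` of representations of the double quiver. -/
def Rep (α : Q.I → ℕ) : Type :=
  ∀ a : Q.DA, Matrix (Fin (α (Q.dh a))) (Fin (α (Q.dt a))) K

/-- The moment map
`μ_α(x)_i = ∑_{a∈Q, h(a)=i} x_a x_{a*} − ∑_{a∈Q, t(a)=i} x_{a*} x_a`. -/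
def moment (α : Q.I → ℕ) (x : Q.Rep K α) (i : Q.I) :
    Matrix (Fin (α i)) (Fin (α i)) K :=
  (∑ a : Q.A, if h : Q.h a = i then
      (x (Sum.inl a) * x (Sum.inr a)).submatrix
        (Fin.cast (congrArg α h).symm) (Fin.cast (congrArg α h).symm)
    else 0)
  - ∑ a : Q.A, if h : Q.t a = i then
      (x (Sum.inr a) * x (Sum.inl a)).submatrix
        (Fin.cast (congrArg α h).symm) (Fin.cast (congrArg α h).symm)
    else 0

/-- The fibre `μ_α^{-1}(λ)` of the moment map over (the central element
corresponding to) `λ`. -/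
def MomentFiber (l : Q.I → K) (α : Q.I → ℕ) : Set (Q.Rep K α) :=
  {x | ∀ i : Q.I, Q.moment K α x i = l i • (1 : Matrix (Fin (α i)) (Fin (α i)) K)}

/-- The group `∏_i GL(α_i,K)`; it acts on `Rep(Q̄,α)` by conjugation, with the same
orbits and the same invariant functions as `G(α) = (∏_i GL(α_i,K))/K^*`. -/
def Gl (α : Q.I → ℕ) : Type := ∀ i : Q.I, Matrix.GeneralLinearGroup (Fin (α i)) K

/-- The conjugation action of `∏_i GL(α_i,K)` on `Rep(Q̄,α)`. -/
def glAct (α : Q.I → ℕ) (g : Q.Gl K α) (x : Q.Rep K α) : Q.Rep K α :=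
  fun a => (g (Q.dh a) : Matrix (Fin (α (Q.dh a))) (Fin (α (Q.dh a))) K) * x a *
    (((g (Q.dt a))⁻¹ : Matrix.GeneralLinearGroup (Fin (α (Q.dt a))) K) :
      Matrix (Fin (α (Q.dt a))) (Fin (α (Q.dt a))) K)

/-- Coordinates on `Rep(Q̄,α)`: matrix entries. -/
def Coords (α : Q.I → ℕ) : Type :=
  Σ a : Q.DA, Fin (α (Q.dh a)) × Fin (α (Q.dt a))

/-- The coordinate ring `K[V]` of a subset `V` of `Rep(Q̄,α)` : the algebra of
`K`-valued functions on `V` which are restrictions of polynomial functions. -/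
def fnRing (α : Q.I → ℕ) (V : Set (Q.Rep K α)) : Subalgebra K (↥V → K) :=
  (MvPolynomial.aeval
    (fun c : Q.Coords α => fun v : ↥V => v.1 c.1 c.2.1 c.2.2) :
    MvPolynomial (Q.Coords α) K →ₐ[K] (↥V → K)).range

end WithField

end FinQuiver

/-- The subalgebra of functions invariant under a relation (e.g. the orbit
relation of a group action). -/
def relInv (K : Type) [Field K] {V : Type} (R : V → V → Prop) :
    Subalgebra K (V → K) where
  carrier := {f | ∀ x y : V, R x y → f x = f y}
  mul_mem' := by
    intro f g hf hg x y hxy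
    simp only [Pi.mul_apply, hf x y hxy, hg x y hxy]
  one_mem' := fun x y _ => rfl
  add_mem' := by
    intro f g hf hg x y hxy
    simp only [Pi.add_apply, hf x y hxy, hg x y hxy]
  zero_mem' := fun x y _ => rfl
  algebraMap_mem' := fun c x y _ => rfl

namespace FinQuiver

variable (Q : FinQuiver) (K : Type) [Field K]

/-- The coordinate ring of the Marsden–Weinstein reduction
`N(λ,α) = μ_α^{-1}(λ) ⫽ G(α)` : the `G(α)`-invariant functions in the coordinate
ring of `μ_α^{-1}(λ)`.  Two such reductions are isomorphic as (affine) varieties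
exactly when these `K`-algebras are isomorphic. -/
def InvRing (l : Q.I → K) (α : Q.I → ℕ) :
    Subalgebra K (↥(Q.MomentFiber K l α) → K) :=
  Q.fnRing K α (Q.MomentFiber K l α) ⊓
    relInv K (fun x y : ↥(Q.MomentFiber K l α) =>
      ∃ g : Q.Gl K α, y.1 = Q.glAct K α g x.1)

/-- Index type for a product `∏_t X_t^{m_t}`. -/
@[reducible] def SymIdx (s : ℕ) (m : Fin s → ℕ) : Type := Σ t : Fin s, Fin (m t)

/-- The product `∏_{t} Rep(Q̄, d_t)^{m_t}` of representation spaces. -/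
def SymRep (s : ℕ) (m : Fin s → ℕ) (d : Fin s → (Q.I → ℕ)) : Type :=
  ∀ p : SymIdx s m, Q.Rep K (d p.1)

/-- The product `∏_t μ_{d_t}^{-1}(λ)^{m_t}` of moment map fibres. -/
def SymFiber (s : ℕ) (m : Fin s → ℕ) (d : Fin s → (Q.I → ℕ)) (l : Q.I → K) :
    Set (Q.SymRep K s m d) :=
  {x | ∀ p : SymIdx s m, x p ∈ Q.MomentFiber K l (d p.1)}

/-- Polynomial functions on the product of fibres. -/
def symFnRing (s : ℕ) (m : Fin s → ℕ) (d : Fin s → (Q.I → ℕ)) (l : Q.I → K) :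
    Subalgebra K (↥(Q.SymFiber K s m d l) → K) :=
  (MvPolynomial.aeval
    (fun c : Σ p : SymIdx s m, Q.Coords (d p.1) =>
      fun v : ↥(Q.SymFiber K s m d l) => v.1 c.1 c.2.1 c.2.2.1 c.2.2.2) :
    MvPolynomial (Σ p : SymIdx s m, Q.Coords (d p.1)) K →ₐ[K]
      (↥(Q.SymFiber K s m d l) → K)).range

/-- The componentwise action of the product of the groups `∏ GL(d_t)^{m_t}`. -/
def symGlAct (s : ℕ) (m : Fin s → ℕ) (d : Fin s → (Q.I → ℕ))
    (g : ∀ p : SymIdx s m, Q.Gl K (d p.1)) (x : Q.SymRep K s m d) :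
    Q.SymRep K s m d :=
  fun p => Q.glAct K (d p.1) (g p) (x p)

/-- The action of `∏_t S_{m_t}` permuting the factors of each `X_t^{m_t}`. -/
def symPermAct (s : ℕ) (m : Fin s → ℕ) (d : Fin s → (Q.I → ℕ))
    (π : ∀ t : Fin s, Equiv.Perm (Fin (m t))) (x : Q.SymRep K s m d) :
    Q.SymRep K s m d :=
  fun p => x ⟨p.1, π p.1 p.2⟩

/-- The coordinate ring of the product of symmetric products
`∏_t S^{m_t} N(λ, d_t)` of Marsden–Weinstein reductions: functions on
`∏_t μ_{d_t}^{-1}(λ)^{m_t}` which are polynomial, invariant under all the groups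
`G(d_t)` acting on the separate factors, and symmetric under permutations of the
`m_t` factors of each type `t`. -/
def SymInvRing (s : ℕ) (m : Fin s → ℕ) (d : Fin s → (Q.I → ℕ)) (l : Q.I → K) :
    Subalgebra K (↥(Q.SymFiber K s m d l) → K) :=
  Q.symFnRing K s m d l ⊓
    relInv K (fun x y : ↥(Q.SymFiber K s m d l) =>
      ∃ g : ∀ p : SymIdx s m, Q.Gl K (d p.1), y.1 = Q.symGlAct K s m d g x.1) ⊓
    relInv K (fun x y : ↥(Q.SymFiber K s m d l) =>
      ∃ π : ∀ t : Fin s, Equiv.Perm (Fin (m t)), y.1 = Q.symPermAct K s m d π x.1)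

/-- The trace function `tr_p` of an oriented cycle `p` in `Q̄` :
`tr_p(x) = tr(x_{a_1} ⋯ x_{a_ℓ})`, written out via matrix entries. -/
def cycTr (α : Q.I → ℕ) (p : Q.Cyc) (x : Q.Rep K α) : K :=
  ∑ c : ∀ i : Fin (p.n + 1), Fin (α (Q.dh (p.ar i))),
    ∏ i : Fin (p.n + 1),
      x (p.ar i) (c i) (Fin.cast (congrArg α (p.compat i)).symm (c (i + 1)))

/-- `U` is a subrepresentation of the `Π^λ`-module given by the point
`x ∈ Rep(Q̄,α)` : a collection of subspaces stable under all the maps `x_a`. -/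
def SubRep (α : Q.I → ℕ) (x : Q.Rep K α)
    (U : ∀ i : Q.I, Submodule K (Fin (α i) → K)) : Prop :=
  ∀ a : Q.DA, ∀ v ∈ U (Q.dt a), (x a).mulVec v ∈ U (Q.dh a)

/-- The module given by `x` has the simple module `S_{i₀}` (dimension vector
`ε_{i₀}`, all arrows acting as zero) as a composition factor: it has a subquotient
of dimension vector `ε_{i₀}` on which all arrows act as zero. -/
def HasSFactor (α : Q.I → ℕ) (i0 : Q.I) (x : Q.Rep K α) : Prop :=
  ∃ U W : ∀ i : Q.I, Submodule K (Fin (α i) → K),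
    Q.SubRep K α x U ∧ Q.SubRep K α x W ∧ (∀ i, U i ≤ W i) ∧
    (∀ i, Module.finrank K (W i) =
      Module.finrank K (U i) + (if i = i0 then 1 else 0)) ∧
    (∀ a : Q.DA, Q.dh a = i0 → Q.dt a = i0 →
      ∀ v ∈ W (Q.dt a), (x a).mulVec v ∈ U (Q.dh a))

/-- `W/U` is a simple subquotient of the module given by `x`; the simple
subquotients of a module are, up to isomorphism, exactly its composition factors. -/
def SimpleSubquot (α : Q.I → ℕ) (x : Q.Rep K α)
    (U W : ∀ i : Q.I, Submodule K (Fin (α i) → K)) : Prop :=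
  Q.SubRep K α x U ∧ Q.SubRep K α x W ∧ (∀ i, U i ≤ W i) ∧ U ≠ W ∧
    ∀ V : ∀ i : Q.I, Submodule K (Fin (α i) → K),
      Q.SubRep K α x V → (∀ i, U i ≤ V i) → (∀ i, V i ≤ W i) → V = U ∨ V = W

/-- The direct sum map `∏_{j=1}^m Rep(Q̄,δ) → Rep(Q̄,mδ)` (block diagonal). -/
def dsMap (δ : Q.I → ℕ) (m : ℕ) (y : Fin m → Q.Rep K δ) :
    Q.Rep K (fun i => m * δ i) :=
  fun a => Matrix.of fun r c =>
    if (finProdFinEquiv.symm r).1 = (finProdFinEquiv.symm c).1 then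
      y (finProdFinEquiv.symm r).1 a (finProdFinEquiv.symm r).2
        (finProdFinEquiv.symm c).2
    else 0

end FinQuiver

namespace FinQuiver

section Helper

variable (Q : FinQuiver)

/-! ### The bilinear form -/

lemma bil_eq (α β : Q.I → ℤ) : Q.bil α β = (∑ i, 2 * α i * β i)
    - ∑ a : Q.A, (α (Q.h a) * β (Q.t a) + α (Q.t a) * β (Q.h a)) := by
  unfold bil
  rw [Fintype.sum_sum_type, Finset.sum_add_distrib]

lemma bil_comm (α β : Q.I → ℤ) : Q.bil α β = Q.bil β α := by
  rw [bil_eq, bil_eq]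
  congr 1
  · exact Finset.sum_congr rfl fun i _ => by ring
  · exact Finset.sum_congr rfl fun i _ => by ring

lemma bil_add_left (α α' β : Q.I → ℤ) : Q.bil (α + α') β = Q.bil α β + Q.bil α' β := by
  rw [bil_eq, bil_eq, bil_eq, sub_add_sub_comm, ← Finset.sum_add_distrib, ← Finset.sum_add_distrib]
  congr 1
  · exact Finset.sum_congr rfl fun i _ => by simp only [Pi.add_apply]; ring
  · exact Finset.sum_congr rfl fun i _ => by simp only [Pi.add_apply]; ring

lemma bil_smul_left (c : ℤ) (α β : Q.I → ℤ) : Q.bil (c • α) β = c * Q.bil α β := by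
  rw [bil_eq, bil_eq, mul_sub, Finset.mul_sum, Finset.mul_sum]
  congr 1
  · exact Finset.sum_congr rfl fun i _ => by simp only [Pi.smul_apply, smul_eq_mul]; ring
  · exact Finset.sum_congr rfl fun i _ => by simp only [Pi.smul_apply, smul_eq_mul]; ring

lemma bil_add_right (α β β' : Q.I → ℤ) : Q.bil α (β + β') = Q.bil α β + Q.bil α β' := by
  rw [bil_comm, bil_add_left, bil_comm Q β, bil_comm Q β']

lemma bil_smul_right (c : ℤ) (α β : Q.I → ℤ) : Q.bil α (c • β) = c * Q.bil α β := by
  rw [bil_comm, bil_smul_left, bil_comm]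

lemma bil_neg_left (α β : Q.I → ℤ) : Q.bil (-α) β = - Q.bil α β := by
  have := bil_smul_left Q (-1) α β
  simpa using this

lemma bil_neg_right (α β : Q.I → ℤ) : Q.bil α (-β) = - Q.bil α β := by
  rw [bil_comm, bil_neg_left, bil_comm]

lemma bil_sub_left (α α' β : Q.I → ℤ) : Q.bil (α - α') β = Q.bil α β - Q.bil α' β := by
  rw [sub_eq_add_neg, bil_add_left, bil_neg_left]; ring

lemma bil_sub_right (α β β' : Q.I → ℤ) : Q.bil α (β - β') = Q.bil α β - Q.bil α β' := by
  rw [bil_comm, bil_sub_left, bil_comm Q β, bil_comm Q β']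

lemma bil_sum_right {n : ℕ} (α : Q.I → ℤ) (β : Fin n → Q.I → ℤ) :
    Q.bil α (∑ j, β j) = ∑ j, Q.bil α (β j) :=
  map_sum (AddMonoidHom.mk' (Q.bil α) (bil_add_right Q α)) β Finset.univ

lemma bil_sum_left {n : ℕ} (α : Q.I → ℤ) (β : Fin n → Q.I → ℤ) :
    Q.bil (∑ j, β j) α = ∑ j, Q.bil (β j) α := by
  rw [bil_comm, bil_sum_right]
  exact Finset.sum_congr rfl fun i _ => bil_comm Q _ _

lemma two_pp (α : Q.I → ℤ) : 2 * Q.pp α = 2 - Q.bil α α := by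
  rw [bil_eq]
  unfold pp
  have h1 : (∑ i, 2 * α i * α i) = 2 * ∑ i, α i * α i := by
    rw [Finset.mul_sum]; exact Finset.sum_congr rfl fun i _ => by ring
  have h2 : (∑ a : Q.A, (α (Q.h a) * α (Q.t a) + α (Q.t a) * α (Q.h a)))
      = 2 * ∑ a : Q.A, α (Q.t a) * α (Q.h a) := by
    rw [Finset.mul_sum]; exact Finset.sum_congr rfl fun i _ => by ring
  rw [h1, h2]; ring

lemma bil_ev (α : Q.I → ℤ) (i : Q.I) : Q.bil α (Q.ev i) = 2 * α i
    - ∑ a : Q.A, ((if Q.t a = i then α (Q.h a) else 0) + if Q.h a = i then α (Q.t a) else 0) := by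
  rw [bil_eq]
  simp [ev]

lemma bil_ev_ev_self (i : Q.I) (hi : Q.Loopfree i) : Q.bil (Q.ev i) (Q.ev i) = 2 := by
  rw [bil_ev]
  have : ∀ a : Q.A, ((if Q.t a = i then Q.ev i (Q.h a) else 0)
      + if Q.h a = i then Q.ev i (Q.t a) else 0) = 0 := by
    intro a
    have := hi a
    simp only [ev]
    by_cases h1 : Q.h a = i <;> by_cases h2 : Q.t a = i <;> simp_all
  simp only [this]
  simp [ev]

lemma bil_ev_ev_ne (i j : Q.I) (hij : i ≠ j) : Q.bil (Q.ev i) (Q.ev j) ≤ 0 := by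
  rw [bil_ev]
  have : Q.ev i j = 0 := by simp [ev, hij.symm]
  rw [this]
  have : 0 ≤ ∑ a : Q.A, ((if Q.t a = j then Q.ev i (Q.h a) else 0)
      + if Q.h a = j then Q.ev i (Q.t a) else 0) := by
    apply Finset.sum_nonneg
    intro a _
    have : ∀ k, 0 ≤ Q.ev i k := by intro k; simp only [ev]; split_ifs <;> simp
    apply add_nonneg <;> split_ifs <;> simp [this]
  linarith

/-- At a vertex with a loop, nonnegative vectors pair nonpositively. -/
lemma bil_ev_loop (α : Q.I → ℤ) (hα : ∀ i, 0 ≤ α i) (i : Q.I) (hi : ¬ Q.Loopfree i) :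
    Q.bil α (Q.ev i) ≤ 0 := by
  unfold Loopfree at hi
  push Not at hi
  obtain ⟨a, ha, hb⟩ := hi
  rw [bil_ev]
  have h0 : ∀ a : Q.A, 0 ≤ ((if Q.t a = i then α (Q.h a) else 0)
      + if Q.h a = i then α (Q.t a) else 0) := by
    intro a
    apply add_nonneg <;> split_ifs <;> simp [hα]
  have := Finset.single_le_sum (fun a _ => h0 a) (Finset.mem_univ a)
  simp only [ha, hb, if_true] at this
  linarith

/-! ### The reflections -/

/-- The reflection as a linear map. -/
def sr (i : Q.I) : Module.End ℤ (Q.I → ℤ) where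
  toFun α := Q.refl i α
  map_add' α β := by
    simp only [refl, bil_add_left, add_smul]; abel
  map_smul' c α := by
    simp only [refl, bil_smul_left, RingHom.id_apply, smul_sub, smul_smul]

lemma sr_apply (i : Q.I) (α : Q.I → ℤ) : Q.sr i α = α - Q.bil α (Q.ev i) • Q.ev i := rfl

lemma sr_sq (i : Q.I) (hi : Q.Loopfree i) : Q.sr i * Q.sr i = 1 := by
  ext1 α
  apply LinearMap.ext
  intro c
  simp only [LinearMap.comp_apply, Module.End.mul_apply, Module.End.one_apply, sr_apply]
  simp only [bil_sub_left, bil_smul_left, bil_ev_ev_self Q i hi]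
  module

lemma sr_sr (i : Q.I) (hi : Q.Loopfree i) (α : Q.I → ℤ) : Q.sr i (Q.sr i α) = α := by
  have := LinearMap.congr_fun (sr_sq Q i hi) α
  simpa using this

lemma bil_sr (i : Q.I) (hi : Q.Loopfree i) (α β : Q.I → ℤ) :
    Q.bil (Q.sr i α) (Q.sr i β) = Q.bil α β := by
  simp only [sr_apply, bil_sub_left, bil_sub_right, bil_smul_left, bil_smul_right,
    bil_ev_ev_self Q i hi, bil_comm Q (Q.ev i)]
  ring

lemma pp_sr (i : Q.I) (hi : Q.Loopfree i) (α : Q.I → ℤ) : Q.pp (Q.sr i α) = Q.pp α := by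
  have h1 := two_pp Q (Q.sr i α)
  have h2 := two_pp Q α
  rw [bil_sr Q i hi] at h1
  linarith

lemma sr_ev_self (i : Q.I) (hi : Q.Loopfree i) : Q.sr i (Q.ev i) = - Q.ev i := by
  rw [sr_apply, bil_ev_ev_self Q i hi]; module

lemma sr_comm (i j : Q.I) (h : Q.bil (Q.ev i) (Q.ev j) = 0) :
    Q.sr i * Q.sr j = Q.sr j * Q.sr i := by
  apply LinearMap.ext
  intro α
  have h' : Q.bil (Q.ev j) (Q.ev i) = 0 := by rw [bil_comm, h]
  simp only [Module.End.mul_apply, sr_apply, bil_sub_left, bil_smul_left, h, h']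
  module

lemma sr_braid (i j : Q.I) (hi : Q.Loopfree i) (hj : Q.Loopfree j)
    (h : Q.bil (Q.ev i) (Q.ev j) = -1) :
    Q.sr i * Q.sr j * Q.sr i = Q.sr j * Q.sr i * Q.sr j := by
  apply LinearMap.ext
  intro α
  have h' : Q.bil (Q.ev j) (Q.ev i) = -1 := by rw [bil_comm, h]
  simp only [Module.End.mul_apply, sr_apply, bil_sub_left, bil_smul_left, h, h',
    bil_ev_ev_self Q i hi, bil_ev_ev_self Q j hj]
  module

/-- `g` is a product of `n` reflections at loopfree vertices. -/
inductive Wd : ℕ → Module.End ℤ (Q.I → ℤ) → Prop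
  | one : Wd 0 1
  | mul (n : ℕ) (g : Module.End ℤ (Q.I → ℤ)) (i : Q.I) (hi : Q.Loopfree i) (hg : Wd n g) :
      Wd (n + 1) (g * Q.sr i)

/-- The Weyl group (as a predicate). -/
def InW (g : Module.End ℤ (Q.I → ℤ)) : Prop := ∃ n, Q.Wd n g

/-- The length function. -/
def len (g : Module.End ℤ (Q.I → ℤ)) : ℕ := sInf {n | Q.Wd n g}

variable {Q}

lemma len_spec {g : Module.End ℤ (Q.I → ℤ)} (hg : Q.InW g) : Q.Wd (Q.len g) g :=
  Nat.sInf_mem (s := {n | Q.Wd n g}) hg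

lemma len_le {g : Module.End ℤ (Q.I → ℤ)} {n : ℕ} (hg : Q.Wd n g) : Q.len g ≤ n :=
  Nat.sInf_le hg

lemma InW.mul {g : Module.End ℤ (Q.I → ℤ)} (hg : Q.InW g) {i : Q.I} (hi : Q.Loopfree i) :
    Q.InW (g * Q.sr i) := by
  obtain ⟨n, hn⟩ := hg
  exact ⟨n + 1, Wd.mul n g i hi hn⟩

lemma InW.one : Q.InW 1 := ⟨0, Wd.one⟩

lemma InW.left {g : Module.End ℤ (Q.I → ℤ)} (hg : Q.InW g) {i : Q.I} (hi : Q.Loopfree i) :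
    Q.InW (Q.sr i * g) := by
  obtain ⟨n, hn⟩ := hg
  induction hn with
  | one => simpa using InW.one.mul hi
  | mul n g j hj hg ih => rw [← mul_assoc]; exact ih.mul hj

lemma InW.inv {g : Module.End ℤ (Q.I → ℤ)} (hg : Q.InW g) : ∃ g', Q.InW g' ∧ g' * g = 1 := by
  obtain ⟨n, hn⟩ := hg
  induction hn with
  | one => exact ⟨1, InW.one, by simp⟩
  | mul n g j hj hg ih =>
    obtain ⟨g', h1, h2⟩ := ih
    refine ⟨Q.sr j * g', h1.left hj, ?_⟩
    rw [mul_assoc, ← mul_assoc g', h2, one_mul, sr_sq Q j hj]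

lemma mul_sr_sr (g : Module.End ℤ (Q.I → ℤ)) {i : Q.I} (hi : Q.Loopfree i) :
    g * Q.sr i * Q.sr i = g := by
  rw [mul_assoc, sr_sq Q i hi, mul_one]

lemma len_mul {g : Module.End ℤ (Q.I → ℤ)} (hg : Q.InW g) {i : Q.I} (hi : Q.Loopfree i) :
    Q.len (g * Q.sr i) ≤ Q.len g + 1 := len_le (Wd.mul _ g i hi (len_spec hg))

lemma len_desc {g : Module.End ℤ (Q.I → ℤ)} (hg : Q.InW g) :
    g = 1 ∨ ∃ j, Q.Loopfree j ∧ Q.len (g * Q.sr j) < Q.len g := by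
  have h := len_spec hg
  generalize hn : Q.len g = n at h
  cases h with
  | one => exact Or.inl rfl
  | mul n g i hi hg' =>
    right
    refine ⟨i, hi, ?_⟩
    rw [mul_sr_sr g hi]
    have := len_le hg'
    omega

lemma ev_nonneg (i : Q.I) : 0 ≤ Q.ev i := by
  intro k; simp only [ev, Pi.zero_apply]; split_ifs <;> simp

lemma mul_sr_ev_self (g : Module.End ℤ (Q.I → ℤ)) {i : Q.I} (hi : Q.Loopfree i) :
    (g * Q.sr i) (Q.ev i) = - g (Q.ev i) := by
  rw [Module.End.mul_apply, sr_ev_self Q i hi, map_neg]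

lemma mul_sr_ev (g : Module.End ℤ (Q.I → ℤ)) (i : Q.I) (α : Q.I → ℤ) :
    (g * Q.sr i) α = g α - Q.bil α (Q.ev i) • g (Q.ev i) := by
  rw [Module.End.mul_apply, sr_apply, map_sub, map_smul]

/-- The key positivity statement for Coxeter groups. -/
lemma key_pos (n : ℕ) : ∀ g : Module.End ℤ (Q.I → ℤ), Q.InW g → Q.len g = n →
    ∀ i, Q.Loopfree i → Q.len g ≤ Q.len (g * Q.sr i) →
    0 ≤ g (Q.ev i) ∧ ∀ j, Q.Loopfree j → Q.bil (Q.ev i) (Q.ev j) ≤ -2 →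
      0 ≤ g (Q.ev i) + g (Q.ev j) := by
  induction n using Nat.strong_induction_on with
  | _ n ih =>
  intro g hg hn
  -- the step for a fixed descent `j`
  have step : ∀ i, Q.Loopfree i → Q.len g ≤ Q.len (g * Q.sr i) →
      ∀ j, Q.Loopfree j → Q.len (g * Q.sr j) < Q.len g → 0 ≤ g (Q.ev i) ∧
      (Q.bil (Q.ev i) (Q.ev j) ≤ -2 → 0 ≤ g (Q.ev i) + g (Q.ev j)) := by
    intro i hi hlen j hj hjl
    have hij : i ≠ j := by
      rintro rfl
      omega
    obtain ⟨g1, hg1⟩ : ∃ g1, g1 = g * Q.sr j := ⟨_, rfl⟩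
    have hg1' : g1 * Q.sr j = g := by rw [hg1, mul_sr_sr g hj]
    have hW1 : Q.InW g1 := hg1 ▸ hg.mul hj
    rw [← hg1] at hjl
    have hp1 : 0 ≤ g1 (Q.ev j) :=
      (ih _ (hn ▸ hjl) g1 hW1 rfl j hj (by rw [hg1']; omega)).1
    have hgi : g (Q.ev i) = g1 (Q.ev i) - Q.bil (Q.ev i) (Q.ev j) • g1 (Q.ev j) := by
      rw [← hg1', mul_sr_ev]
    have hgj : g (Q.ev j) = - g1 (Q.ev j) := by rw [← hg1', mul_sr_ev_self g1 hj]
    by_cases hc : Q.len g1 ≤ Q.len (g1 * Q.sr i)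
    · have hp2 : 0 ≤ g1 (Q.ev i) := (ih _ (hn ▸ hjl) g1 hW1 rfl i hi hc).1
      constructor
      · rw [hgi]
        have := bil_ev_ev_ne Q i j hij
        intro k
        have h1 := hp1 k
        have h2 := hp2 k
        simp only [Pi.zero_apply, Pi.sub_apply, Pi.smul_apply, smul_eq_mul] at *
        nlinarith
      · intro hb
        rw [hgi, hgj]
        intro k
        have h1 := hp1 k
        have h2 := hp2 k
        simp only [Pi.zero_apply, Pi.sub_apply, Pi.add_apply, Pi.neg_apply, Pi.smul_apply, smul_eq_mul] at *
        nlinarith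
    · push Not at hc
      obtain ⟨g2, hg2⟩ : ∃ g2, g2 = g1 * Q.sr i := ⟨_, rfl⟩
      have hg2' : g2 * Q.sr i = g1 := by rw [hg2, mul_sr_sr g1 hi]
      have hW2 : Q.InW g2 := hg2 ▸ hW1.mul hi
      rw [← hg2] at hc
      rcases lt_or_eq_of_le (bil_ev_ev_ne Q i j hij) with hneg | h0
      · by_cases hm : Q.bil (Q.ev i) (Q.ev j) = -1
        · refine ⟨?_, by intro h; omega⟩
          have hg1i : g1 (Q.ev i) = - g2 (Q.ev i) := by rw [← hg2', mul_sr_ev_self g2 hi]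
          have hg1j : g1 (Q.ev j) = g2 (Q.ev j) + g2 (Q.ev i) := by
            rw [← hg2', mul_sr_ev, bil_comm, hm]; module
          have : g (Q.ev i) = g2 (Q.ev j) := by
            rw [hgi, hm, hg1i, hg1j]; module
          rw [this]
          refine (ih _ (by omega) g2 hW2 rfl j hj ?_).1
          by_contra hlt
          push Not at hlt
          have hW3 := hW2.mul hj
          have e : g * Q.sr i = g2 * Q.sr j * Q.sr i * Q.sr j := by
            have : g2 = (g2 * Q.sr j) * Q.sr j := by rw [mul_sr_sr g2 hj]
            rw [← hg1', ← hg2']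
            have hb := sr_braid Q i j hi hj hm
            calc g2 * Q.sr i * Q.sr j * Q.sr i = g2 * (Q.sr i * Q.sr j * Q.sr i) := by
                  simp only [mul_assoc]
              _ = g2 * (Q.sr j * Q.sr i * Q.sr j) := by rw [hb]
              _ = _ := by simp only [mul_assoc]
          have l1 := len_mul hW3 hi
          have l2 := len_mul (hW3.mul hi) hj
          rw [← e] at l2
          omega
        · have hb : Q.bil (Q.ev i) (Q.ev j) ≤ -2 := by omega
          have hs := (ih _ (hn ▸ hjl) g1 hW1 rfl j hj (by rw [hg1']; omega)).2 i hi
            (by rw [bil_comm]; exact hb)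
          constructor
          · rw [hgi]
            intro k
            have h1 := hp1 k
            have h2 := hs k
            simp only [Pi.zero_apply, Pi.sub_apply, Pi.add_apply, Pi.smul_apply, smul_eq_mul] at *
            nlinarith
          · intro _
            rw [hgi, hgj]
            intro k
            have h1 := hp1 k
            have h2 := hs k
            simp only [Pi.zero_apply, Pi.sub_apply, Pi.add_apply, Pi.neg_apply, Pi.smul_apply,
              smul_eq_mul] at *
            nlinarith
      · exfalso
        have e : g * Q.sr i = g2 * Q.sr j := by
          rw [← hg1', mul_assoc, ← sr_comm Q i j h0, ← mul_assoc, ← hg2]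
        have l1 := len_mul hW2 hj
        rw [← e] at l1
        omega
  have first : ∀ i, Q.Loopfree i → Q.len g ≤ Q.len (g * Q.sr i) → 0 ≤ g (Q.ev i) := by
    intro i hi hlen
    rcases len_desc hg with h1 | ⟨j, hj, hjl⟩
    · rw [h1]; exact ev_nonneg i
    · exact (step i hi hlen j hj hjl).1
  intro i hi hlen
  refine ⟨first i hi hlen, ?_⟩
  intro j hj hb
  by_cases hjl : Q.len (g * Q.sr j) < Q.len g
  · exact (step i hi hlen j hj hjl).2 hb
  · exact add_nonneg (first i hi hlen) (first j hj (not_lt.mp hjl))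

/-- Real roots are positive or negative. -/
lemma real_sign {g : Module.End ℤ (Q.I → ℤ)} (hg : Q.InW g) {i : Q.I} (hi : Q.Loopfree i) :
    0 ≤ g (Q.ev i) ∨ g (Q.ev i) ≤ 0 := by
  by_cases h : Q.len g ≤ Q.len (g * Q.sr i)
  · exact Or.inl (key_pos _ g hg rfl i hi h).1
  · right
    have := (key_pos _ (g * Q.sr i) (hg.mul hi) rfl i hi
      (by rw [mul_sr_sr g hi]; omega)).1
    rw [mul_sr_ev_self g hi] at this
    exact neg_nonneg.mp this

/-- Antidominant vectors are minimal in their orbit. -/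
lemma antidom_le (n : ℕ) (α : Q.I → ℤ) (hα : ∀ i, Q.Loopfree i → Q.bil α (Q.ev i) ≤ 0) :
    ∀ g : Module.End ℤ (Q.I → ℤ), Q.InW g → Q.len g = n → α ≤ g α := by
  induction n using Nat.strong_induction_on with
  | _ n ih =>
  intro g hg hn
  rcases len_desc hg with h1 | ⟨j, hj, hjl⟩
  · rw [h1]; exact le_refl _
  · have hW := hg.mul hj
    have h1 := ih _ (hn ▸ hjl) _ hW rfl
    have h2 := (key_pos _ (g * Q.sr j) hW rfl j hj (by rw [mul_sr_sr g hj]; omega)).1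
    have h3 : g α = (g * Q.sr j) α - Q.bil α (Q.ev j) • (g * Q.sr j) (Q.ev j) := by
      rw [← mul_sr_ev, mul_sr_sr g hj]
    rw [h3]
    intro k
    have a1 := h1 k
    have a2 := h2 k
    have a3 := hα j hj
    simp only [Pi.zero_apply, Pi.sub_apply, Pi.smul_apply, smul_eq_mul] at *
    nlinarith

/-- Description of roots through the Weyl group. -/
lemma root_form {α : Q.I → ℤ} (h : Q.IsRoot α) : ∃ g, Q.InW g ∧
    ((∃ i, Q.Loopfree i ∧ α = g (Q.ev i)) ∨ (∃ γ, Q.InFund γ ∧ α = g γ) ∨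
      (∃ γ, Q.InFund γ ∧ α = g (-γ))) := by
  induction h with
  | simple i hi => exact ⟨1, InW.one, Or.inl ⟨i, hi, rfl⟩⟩
  | fund α hα => exact ⟨1, InW.one, Or.inr (Or.inl ⟨α, hα, rfl⟩)⟩
  | neg_fund α hα => exact ⟨1, InW.one, Or.inr (Or.inr ⟨α, hα, rfl⟩)⟩
  | reflect i hi α hα ih =>
    obtain ⟨g, hg, h⟩ := ih
    refine ⟨Q.sr i * g, hg.left hi, ?_⟩
    rcases h with ⟨j, hj, rfl⟩ | ⟨γ, hγ, rfl⟩ | ⟨γ, hγ, rfl⟩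
    · exact Or.inl ⟨j, hj, rfl⟩
    · exact Or.inr (Or.inl ⟨γ, hγ, rfl⟩)
    · exact Or.inr (Or.inr ⟨γ, hγ, rfl⟩)

lemma root_sign {α : Q.I → ℤ} (h : Q.IsRoot α) : 0 ≤ α ∨ α ≤ 0 := by
  obtain ⟨g, hg, h⟩ := root_form h
  rcases h with ⟨j, hj, rfl⟩ | ⟨γ, hγ, rfl⟩ | ⟨γ, hγ, rfl⟩
  · exact real_sign hg hj
  · left
    exact le_trans (fun i => hγ.2.1 i) (antidom_le _ γ (fun i _ => hγ.2.2.2 i) g hg rfl)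
  · right
    rw [map_neg]
    have : 0 ≤ g γ :=
      le_trans (fun i => hγ.2.1 i) (antidom_le _ γ (fun i _ => hγ.2.2.2 i) g hg rfl)
    exact neg_nonpos.mpr this

lemma bil_W {g : Module.End ℤ (Q.I → ℤ)} (hg : Q.InW g) : ∀ α β, Q.bil (g α) (g β) = Q.bil α β := by
  obtain ⟨n, hn⟩ := hg
  induction hn with
  | one => intro α β; rfl
  | mul n g j hj hg ih =>
    intro α β
    rw [Module.End.mul_apply, Module.End.mul_apply, ih, bil_sr Q j hj]

lemma bil_self_fund {γ : Q.I → ℤ} (hγ : Q.InFund γ) : Q.bil γ γ ≤ 0 := by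
  have e : γ = ∑ i, γ i • Q.ev i := by
    funext k
    simp [Finset.sum_apply, ev]
  have : ∀ s : Finset Q.I, Q.bil γ (∑ i ∈ s, γ i • Q.ev i) ≤ 0 := by
    intro s
    induction s using Finset.induction_on with
    | empty =>
      have := bil_smul_right Q 0 γ 0
      simp at this
      simp [this]
    | insert a s ha ih =>
      rw [Finset.sum_insert ha, bil_add_right, bil_smul_right]
      have := mul_nonpos_of_nonneg_of_nonpos (hγ.2.1 a) (hγ.2.2.2 a)
      linarith
  have h2 := this Finset.univ
  rwa [← e] at h2

/-- `q ≤ 1` on roots, with `(α,α) = 2` or `(α,α) ≤ 0`. -/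
lemma root_bil {α : Q.I → ℤ} (h : Q.IsRoot α) : Q.bil α α = 2 ∨ Q.bil α α ≤ 0 := by
  obtain ⟨g, hg, h⟩ := root_form h
  rcases h with ⟨j, hj, rfl⟩ | ⟨γ, hγ, rfl⟩ | ⟨γ, hγ, rfl⟩
  · left; rw [bil_W hg, bil_ev_ev_self Q j hj]
  · right; rw [bil_W hg]; exact bil_self_fund hγ
  · right; rw [bil_W hg, bil_neg_left, bil_neg_right, neg_neg]; exact bil_self_fund hγ

/-- Reflections preserve positive roots other than the simple one. -/
lemma posRoot_sr {α : Q.I → ℤ} (h : Q.IsPosRoot α) {i : Q.I} (hi : Q.Loopfree i)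
    (hne : α ≠ Q.ev i) : Q.IsPosRoot (Q.sr i α) := by
  obtain ⟨hr, hp, h0⟩ := h
  have hr' : Q.IsRoot (Q.sr i α) := IsRoot.reflect i hi α hr
  have hk : ∃ k, k ≠ i ∧ 0 < α k := by
    by_contra hcon
    push Not at hcon
    have e : α = α i • Q.ev i := by
      funext k
      by_cases hki : k = i
      · simp [ev, hki]
      · have := le_antisymm (hcon k hki) (hp k)
        simp [ev, hki, this]
    have hb : Q.bil α α = α i * α i * 2 := by
      conv_lhs => rw [e]
      rw [bil_smul_left, bil_smul_right, bil_ev_ev_self Q i hi]; ring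
    have hpos : 0 < α i := by
      rcases lt_or_eq_of_le (hp i) with h | h
      · exact h
      · exfalso; apply h0; rw [e, ← h]; simp
    rcases root_bil hr with h | h
    · have : α i = 1 := by nlinarith
      apply hne; rw [e, this, one_smul]
    · nlinarith
  obtain ⟨k, hki, hk⟩ := hk
  have hk' : Q.sr i α k = α k := by
    simp [sr_apply, ev, hki]
  refine ⟨hr', ?_, ?_⟩
  · rcases root_sign hr' with h | h
    · exact h
    · exfalso
      have := h k
      rw [hk'] at this
      simp at this
      omega
  · intro h
    have := congrFun h k
    rw [hk'] at this
    simp at this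
    omega

/-- An antidominant positive root which is not real lies in the fundamental region. -/
lemma inFund_of_antidom {β : Q.I → ℤ} (h : Q.IsPosRoot β) (hq : Q.bil β β < 0)
    (ha : ∀ i, Q.bil β (Q.ev i) ≤ 0) : Q.InFund β := by
  obtain ⟨hr, hp, h0⟩ := h
  obtain ⟨g, hg, h⟩ := root_form hr
  rcases h with ⟨j, hj, rfl⟩ | ⟨γ, hγ, e⟩ | ⟨γ, hγ, e⟩
  · rw [bil_W hg, bil_ev_ev_self Q j hj] at hq; omega
  · obtain ⟨g', hg', e'⟩ := hg.inv
    have h1 := antidom_le _ γ (fun i _ => hγ.2.2.2 i) g hg rfl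
    have h2 := antidom_le _ β (fun i _ => ha i) g' hg' rfl
    have h3 : g' β = γ := by
      rw [e, ← Module.End.mul_apply, e']; rfl
    rw [h3] at h2
    rw [← e] at h1
    rw [le_antisymm h2 h1]
    exact hγ
  · exfalso
    have h1 := antidom_le _ γ (fun i _ => hγ.2.2.2 i) g hg rfl
    rw [map_neg] at e
    apply h0
    funext k
    have a1 := hp k
    have a2 := hγ.2.1 k
    have a3 : γ k ≤ (g γ) k := h1 k
    have a4 := congrFun e k
    simp only [Pi.neg_apply] at a4
    simp only [Pi.zero_apply]
    omega

/-- Positive multiples of non-real positive roots are positive roots. -/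
lemma posRoot_smul {β : Q.I → ℤ} (h : Q.IsPosRoot β) (hq : Q.bil β β < 0) {m : ℕ} (hm : 1 ≤ m) :
    Q.IsPosRoot (m • β) := by
  obtain ⟨hr, hp, h0⟩ := h
  have hm0 : (m : ℤ) ≠ 0 := by omega
  have hf : ∀ γ, Q.InFund γ → Q.InFund (m • γ) := by
    intro γ hγ
    obtain ⟨a, b, c, d⟩ := hγ
    have hz : ∀ i, (m • γ) i ≠ 0 ↔ γ i ≠ 0 := by
      intro i; simp; omega
    refine ⟨?_, ?_, ?_, ?_⟩
    · intro h; apply a; funext i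
      have := congrFun h i
      simp at this
      rcases this with h | h
      · omega
      · simpa using h
    · intro i
      have := b i
      simp only [Pi.smul_apply, nsmul_eq_mul]
      positivity
    · unfold SuppConnected
      simp only [hz]
      exact c
    · intro i
      rw [← natCast_zsmul, bil_smul_left]
      exact mul_nonpos_of_nonneg_of_nonpos (by positivity) (d i)
  refine ⟨?_, ?_, ?_⟩
  · have key : ∀ α, Q.IsRoot α → Q.bil α α < 0 → Q.IsRoot (m • α) := by
      intro α hα
      induction hα with
      | simple i hi => intro h; rw [bil_ev_ev_self Q i hi] at h; omega
      | fund α hα => intro _; exact IsRoot.fund _ (hf α hα)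
      | neg_fund α hα => intro _; rw [smul_neg]; exact IsRoot.neg_fund _ (hf α hα)
      | reflect i hi α hα ih =>
        intro h
        have h' : Q.bil α α < 0 := by
          have := bil_sr Q i hi α α
          change Q.bil (Q.sr i α) (Q.sr i α) < 0 at h
          omega
        have := IsRoot.reflect i hi _ (ih h')
        have e : m • Q.refl i α = Q.refl i (m • α) := (map_nsmul (Q.sr i) m α).symm
        rw [e]; exact this
    exact key β hr hq
  · intro i
    have := hp i
    simp only [Pi.smul_apply, nsmul_eq_mul]
    positivity
  · intro h; apply h0; funext i
    have := congrFun h i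
    simp at this
    rcases this with h | h
    · omega
    · simpa using h

end Helper

end FinQuiver

namespace FinQuiver

section Helper2

variable {Q : FinQuiver}

/-! ### The quadratic form on the fundamental region -/

/-- The energy formula. -/
lemma energy (β u v : Q.I → ℤ) (y z : Q.I → ℚ) (hu : ∀ i, (u i : ℚ) = β i * y i)
    (hv : ∀ i, (v i : ℚ) = β i * z i) :
    (Q.bil u v : ℚ) = (∑ i, (Q.bil β (Q.ev i) : ℚ) * β i * (y i * z i))
      + ∑ a : Q.A, (β (Q.h a) : ℚ) * β (Q.t a) * ((y (Q.h a) - y (Q.t a)) * (z (Q.h a) - z (Q.t a))) := by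
  have h1 : (∑ i, (Q.bil β (Q.ev i) : ℚ) * β i * (y i * z i))
      = (∑ i, 2 * (β i : ℚ) * β i * (y i * z i))
      - ∑ a : Q.A, ((β (Q.h a) : ℚ) * β (Q.t a) * (y (Q.t a) * z (Q.t a))
        + (β (Q.h a) : ℚ) * β (Q.t a) * (y (Q.h a) * z (Q.h a))) := by
    have : ∀ i, (Q.bil β (Q.ev i) : ℚ) * β i * (y i * z i)
        = 2 * (β i : ℚ) * β i * (y i * z i)
        - ∑ a : Q.A, ((if Q.t a = i then (β (Q.h a) : ℚ) * β i * (y i * z i) else 0)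
          + if Q.h a = i then (β (Q.t a) : ℚ) * β i * (y i * z i) else 0) := by
      intro i
      rw [bil_ev]
      push_cast
      rw [sub_mul, sub_mul, Finset.sum_mul, Finset.sum_mul]
      congr 1
      apply Finset.sum_congr rfl
      intro a _
      split_ifs <;> ring
    simp only [this]
    rw [Finset.sum_sub_distrib]
    congr 1
    rw [Finset.sum_comm]
    apply Finset.sum_congr rfl
    intro a _
    rw [Finset.sum_add_distrib]
    simp only [Finset.sum_ite_eq, Finset.mem_univ, if_true]
    ring
  rw [h1, bil_eq]
  push_cast
  simp only [hu, hv]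
  rw [sub_add, ← Finset.sum_sub_distrib]
  congr 1
  · exact Finset.sum_congr rfl fun i _ => by ring
  · exact Finset.sum_congr rfl fun i _ => by ring

lemma bil_even (α : Q.I → ℤ) : ∃ k, Q.bil α α = 2 * k := by
  refine ⟨1 - Q.pp α, ?_⟩
  have := two_pp Q α
  linarith

/-- `(β, γ) ≤ 0` for `β` in the fundamental region and `γ ≥ 0`. -/
lemma bil_fund_nonpos {β : Q.I → ℤ} (hβ : ∀ i, Q.bil β (Q.ev i) ≤ 0) {γ : Q.I → ℤ}
    (hγ : ∀ i, 0 ≤ γ i) : Q.bil β γ ≤ 0 := by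
  have e : γ = ∑ i, γ i • Q.ev i := by
    funext k
    simp [Finset.sum_apply, ev]
  have : ∀ s : Finset Q.I, Q.bil β (∑ i ∈ s, γ i • Q.ev i) ≤ 0 := by
    intro s
    induction s using Finset.induction_on with
    | empty =>
      have := bil_smul_right Q 0 β 0
      simp at this
      simp [this]
    | insert a s ha ih =>
      rw [Finset.sum_insert ha, bil_add_right, bil_smul_right]
      have := mul_nonpos_of_nonneg_of_nonpos (hγ a) (hβ a)
      linarith
  have h2 := this Finset.univ
  rwa [← e] at h2

/-- Nontrivial decompositions of `β` in the fundamental region have negative pairing. -/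
lemma decomp_one {β : Q.I → ℤ} (hβ : Q.InFund β) (hq : Q.bil β β < 0) {γ : Q.I → ℤ}
    (h0 : ∀ i, 0 ≤ γ i) (h1 : ∀ i, γ i ≤ β i) (hn0 : γ ≠ 0) (hn1 : γ ≠ β) :
    Q.bil γ (β - γ) ≤ -1 := by
  obtain ⟨hb0, hbp, hconn, hanti⟩ := hβ
  set y : Q.I → ℚ := fun i => (γ i : ℚ) / β i with hy
  have hγy : ∀ i, (γ i : ℚ) = β i * y i := by
    intro i
    simp only [hy]
    by_cases h : β i = 0
    · have : γ i = 0 := le_antisymm (h ▸ h1 i) (h0 i)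
      simp [h, this]
    · have : (β i : ℚ) ≠ 0 := by exact_mod_cast h
      field_simp
  have hγy' : ∀ i, ((β - γ) i : ℚ) = β i * (1 - y i) := by
    intro i
    simp only [Pi.sub_apply]
    push_cast
    rw [hγy i]; ring
  have hy0 : ∀ i, 0 ≤ y i := fun i =>
    div_nonneg (by exact_mod_cast h0 i) (by exact_mod_cast hbp i)
  have hy1 : ∀ i, y i ≤ 1 := by
    intro i
    apply div_le_one_of_le₀ (by exact_mod_cast h1 i) (by exact_mod_cast hbp i)
  have hE := energy β γ (β - γ) y (fun i => 1 - y i) hγy hγy'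
  have t1 : ∀ i ∈ Finset.univ, (Q.bil β (Q.ev i) : ℚ) * β i * (y i * (1 - y i)) ≤ 0 := by
    intro i _
    have a1 : (Q.bil β (Q.ev i) : ℚ) ≤ 0 := by exact_mod_cast hanti i
    have a2 : (0 : ℚ) ≤ β i := by exact_mod_cast hbp i
    have a3 : 0 ≤ y i * (1 - y i) := mul_nonneg (hy0 i) (by linarith [hy1 i])
    exact mul_nonpos_of_nonpos_of_nonneg (mul_nonpos_of_nonpos_of_nonneg a1 a2) a3
  have t2 : ∀ a ∈ Finset.univ, (β (Q.h a) : ℚ) * β (Q.t a) *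
      ((y (Q.h a) - y (Q.t a)) * (1 - y (Q.h a) - (1 - y (Q.t a)))) ≤ 0 := by
    intro a _
    have a1 : (0 : ℚ) ≤ β (Q.h a) := by exact_mod_cast hbp _
    have a2 : (0 : ℚ) ≤ β (Q.t a) := by exact_mod_cast hbp _
    apply mul_nonpos_of_nonneg_of_nonpos (mul_nonneg a1 a2)
    nlinarith [sq_nonneg (y (Q.h a) - y (Q.t a))]
  have s1 := Finset.sum_nonpos t1
  have s2 := Finset.sum_nonpos t2
  by_contra hcon
  have hge : 0 ≤ Q.bil γ (β - γ) := by omega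
  have hge' : (0 : ℚ) ≤ Q.bil γ (β - γ) := by exact_mod_cast hge
  rw [hE] at hge'
  have z1 := (Finset.sum_eq_zero_iff_of_nonpos t1).mp (by linarith)
  have z2 := (Finset.sum_eq_zero_iff_of_nonpos t2).mp (by linarith)
  -- `y` is constant on the support
  have hadj : ∀ i j, β i ≠ 0 → β j ≠ 0 → Q.Adj i j → y i = y j := by
    intro i j hi hj hij
    have hi' : (β i : ℚ) ≠ 0 := by exact_mod_cast hi
    have hj' : (β j : ℚ) ≠ 0 := by exact_mod_cast hj
    obtain ⟨a, ⟨ha, hb⟩ | ⟨ha, hb⟩⟩ := hij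
    · have := z2 a (Finset.mem_univ a)
      rw [ha, hb] at this
      have h3 : (y i - y j) * (1 - y i - (1 - y j)) = 0 := by
        rcases mul_eq_zero.mp this with h | h
        · exact absurd h (mul_ne_zero hi' hj')
        · exact h
      nlinarith
    · have := z2 a (Finset.mem_univ a)
      rw [ha, hb] at this
      have h3 : (y j - y i) * (1 - y j - (1 - y i)) = 0 := by
        rcases mul_eq_zero.mp this with h | h
        · exact absurd h (mul_ne_zero hj' hi')
        · exact h
      nlinarith
  have hconst : ∀ i j, β i ≠ 0 → β j ≠ 0 → y i = y j := by
    intro i j hi hj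
    have := hconn i j hi hj
    induction this with
    | refl => rfl
    | tail _ h ih => exact (ih h.1).trans (hadj _ _ h.1 h.2.1 h.2.2)
  -- a vertex with strict inequality
  obtain ⟨i, hi, hid⟩ : ∃ i, β i ≠ 0 ∧ Q.bil β (Q.ev i) ≠ 0 := by
    by_contra hc
    push Not at hc
    have hE' := energy β β β (fun _ => 1) (fun _ => 1) (by simp) (by simp)
    simp only [sub_self, mul_zero, Finset.sum_const_zero, add_zero] at hE'
    rw [Finset.sum_eq_zero] at hE'
    · have : Q.bil β β = 0 := by exact_mod_cast hE'
      omega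
    · intro i _
      by_cases h : β i = 0
      · simp [h]
      · simp [hc i h]
  have := z1 i (Finset.mem_univ i)
  have hi' : (β i : ℚ) ≠ 0 := by exact_mod_cast hi
  have hid' : (Q.bil β (Q.ev i) : ℚ) ≠ 0 := by exact_mod_cast hid
  rcases mul_eq_zero.mp this with h | h
  · exact absurd h (mul_ne_zero hid' hi')
  rcases mul_eq_zero.mp h with h | h
  · apply hn0
    funext k
    by_cases hk : β k = 0
    · have a := h1 k
      rw [hk] at a
      exact le_antisymm a (h0 k)
    · have := hγy k
      rw [hconst k i hk hi, h, mul_zero] at this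
      exact_mod_cast this
  · apply hn1
    funext k
    by_cases hk : β k = 0
    · rw [hk]; exact le_antisymm (hk ▸ h1 k) (h0 k)
    · have := hγy k
      rw [hconst k i hk hi, show y i = 1 by linarith, mul_one] at this
      exact_mod_cast this

/-- Decompositions `mβ = γ + γ'` with `γ ≤ β`. -/
lemma decomp_low {β : Q.I → ℤ} (hβ : Q.InFund β) (hq : Q.bil β β < 0) {m : ℤ} (hm : 2 ≤ m)
    {γ : Q.I → ℤ} (h0 : ∀ i, 0 ≤ γ i) (h1 : ∀ i, γ i ≤ β i) (hn0 : γ ≠ 0) :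
    Q.bil γ (m • β - γ) ≤ -2 := by
  have e : m • β - γ = (m - 1) • β + (β - γ) := by module
  rw [e, bil_add_right, bil_smul_right]
  have hβγ : Q.bil γ β ≤ 0 := by rw [bil_comm]; exact bil_fund_nonpos hβ.2.2.2 h0
  by_cases hγβ : γ = β
  · obtain ⟨k, hk⟩ := bil_even β
    rw [hγβ, sub_self]
    have z : Q.bil β 0 = 0 := by
      have := bil_smul_right Q 0 β 0
      simpa using this
    rw [z, hk]
    have hk1 : k ≤ -1 := by omega
    nlinarith
  · have d := decomp_one hβ hq h0 h1 hn0 hγβ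
    rcases lt_or_eq_of_le hβγ with h | h
    · nlinarith
    · obtain ⟨k, hk⟩ := bil_even γ
      rw [bil_sub_right] at d ⊢
      rw [h] at d ⊢
      simp only [mul_zero]
      omega

/-- Truncation at `β` is superadditive. -/
lemma trunc {β : Q.I → ℤ} (hβ : Q.InFund β) {m : ℤ} {γ : Q.I → ℤ}
    (h0 : ∀ i, 0 ≤ γ i) (h1 : ∀ i, γ i ≤ m * β i) (hm : 2 ≤ m) :
    Q.bil γ (m • β - γ) ≤ Q.bil (γ ⊓ β) (β - γ ⊓ β)
      + Q.bil (γ - γ ⊓ β) ((m - 1) • β - (γ - γ ⊓ β)) := by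
  obtain ⟨hb0, hbp, hconn, hanti⟩ := hβ
  set y : Q.I → ℚ := fun i => (γ i : ℚ) / β i with hy
  have hγy : ∀ i, (γ i : ℚ) = β i * y i := by
    intro i
    simp only [hy]
    by_cases h : β i = 0
    · have : γ i = 0 := le_antisymm (by have := h1 i; rw [h] at this; simpa using this) (h0 i)
      simp [h, this]
    · have : (β i : ℚ) ≠ 0 := by exact_mod_cast h
      field_simp
  have hy0 : ∀ i, 0 ≤ y i := fun i =>
    div_nonneg (by exact_mod_cast h0 i) (by exact_mod_cast hbp i)
  have hm' : (2 : ℚ) ≤ m := by exact_mod_cast hm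
  have hy1 : ∀ i, y i ≤ m := by
    intro i
    apply div_le_of_le_mul₀ (by exact_mod_cast hbp i) (by linarith) (by exact_mod_cast h1 i)
  have hu : ∀ i, ((γ ⊓ β) i : ℚ) = β i * min (y i) 1 := by
    intro i
    have a2 : (0 : ℚ) ≤ β i := by exact_mod_cast hbp i
    rw [mul_min_of_nonneg _ _ a2, ← hγy i, mul_one, Pi.inf_apply]
    push_cast
    rfl
  have hv : ∀ i, ((γ - γ ⊓ β) i : ℚ) = β i * (y i - min (y i) 1) := by
    intro i
    rw [Pi.sub_apply]
    push_cast
    rw [hu i, hγy i]; ring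
  have hu' : ∀ i, ((β - γ ⊓ β) i : ℚ) = β i * (1 - min (y i) 1) := by
    intro i
    rw [Pi.sub_apply]
    push_cast
    rw [hu i]; ring
  have hv' : ∀ i, (((m - 1) • β - (γ - γ ⊓ β)) i : ℚ)
      = β i * (m - 1 - (y i - min (y i) 1)) := by
    intro i
    rw [Pi.sub_apply]
    push_cast
    rw [hv i]
    simp only [Pi.smul_apply, smul_eq_mul]
    push_cast
    ring
  have comon : ∀ p q : ℚ, 0 ≤ (min p 1 - min q 1) * ((p - min p 1) - (q - min q 1)) := by
    intro p q
    rcases le_total p 1 with hp | hp <;> rcases le_total q 1 with hq | hq <;>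
      simp only [min_eq_left hp, min_eq_right hp, min_eq_left hq, min_eq_right hq] <;> nlinarith
  have E1 := energy β (γ ⊓ β) ((m - 1) • β - (γ - γ ⊓ β)) _ _ hu hv'
  have E2 := energy β (γ - γ ⊓ β) (β - γ ⊓ β) _ _ hv hu'
  have hmin0 : ∀ i, 0 ≤ min (y i) 1 := fun i => le_min (hy0 i) zero_le_one
  have hmin1 : ∀ i, min (y i) 1 ≤ 1 := fun i => min_le_right _ _
  have hmin2 : ∀ i, min (y i) 1 ≤ y i := fun i => min_le_left _ _
  have hsub : ∀ i, y i - min (y i) 1 ≤ m - 1 := by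
    intro i
    have := hy1 i
    rcases le_total (y i) 1 with hp | hp
    · rw [min_eq_left hp]; linarith
    · rw [min_eq_right hp]; linarith
  have N : ∀ (f : Q.I → ℚ), (∀ i, 0 ≤ f i) →
      ∑ i, (Q.bil β (Q.ev i) : ℚ) * β i * f i ≤ 0 := by
    intro f hf
    apply Finset.sum_nonpos
    intro i _
    have a1 : (Q.bil β (Q.ev i) : ℚ) ≤ 0 := by exact_mod_cast hanti i
    have a2 : (0 : ℚ) ≤ β i := by exact_mod_cast hbp i
    exact mul_nonpos_of_nonpos_of_nonneg (mul_nonpos_of_nonpos_of_nonneg a1 a2) (hf i)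
  have M : ∀ (f : Q.A → ℚ), (∀ a, f a ≤ 0) →
      ∑ a : Q.A, (β (Q.h a) : ℚ) * β (Q.t a) * f a ≤ 0 := by
    intro f hf
    apply Finset.sum_nonpos
    intro a _
    have a1 : (0 : ℚ) ≤ β (Q.h a) := by exact_mod_cast hbp _
    have a2 : (0 : ℚ) ≤ β (Q.t a) := by exact_mod_cast hbp _
    exact mul_nonpos_of_nonneg_of_nonpos (mul_nonneg a1 a2) (hf a)
  have n1 : Q.bil (γ ⊓ β) ((m - 1) • β - (γ - γ ⊓ β)) ≤ 0 := by
    have : (Q.bil (γ ⊓ β) ((m - 1) • β - (γ - γ ⊓ β)) : ℚ) ≤ 0 := by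
      rw [E1]
      apply add_nonpos
      · exact N _ fun i => mul_nonneg (hmin0 i) (by linarith [hsub i])
      · apply M
        intro a
        have := comon (y (Q.h a)) (y (Q.t a))
        nlinarith
    exact_mod_cast this
  have n2 : Q.bil (γ - γ ⊓ β) (β - γ ⊓ β) ≤ 0 := by
    have : (Q.bil (γ - γ ⊓ β) (β - γ ⊓ β) : ℚ) ≤ 0 := by
      rw [E2]
      apply add_nonpos
      · exact N _ fun i => mul_nonneg (by linarith [hmin2 i]) (by linarith [hmin1 i])
      · apply M
        intro a
        have := comon (y (Q.h a)) (y (Q.t a))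
        nlinarith
    exact_mod_cast this
  have split : Q.bil γ (m • β - γ) = Q.bil (γ ⊓ β) (β - γ ⊓ β)
      + Q.bil (γ - γ ⊓ β) ((m - 1) • β - (γ - γ ⊓ β))
      + Q.bil (γ ⊓ β) ((m - 1) • β - (γ - γ ⊓ β)) + Q.bil (γ - γ ⊓ β) (β - γ ⊓ β) := by
    generalize γ ⊓ β = u
    simp only [bil_sub_right, bil_sub_left, bil_smul_right, bil_comm Q u γ]
    ring
  linarith

/-- The main estimate. -/
lemma decomp_two {β : Q.I → ℤ} (hβ : Q.InFund β) (hq : Q.bil β β < 0) (n : ℕ) :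
    ∀ γ : Q.I → ℤ, (∀ i, 0 ≤ γ i) → (∀ i, γ i ≤ ((n : ℤ) + 2) * β i) → γ ≠ 0 →
    γ ≠ ((n : ℤ) + 2) • β → Q.bil γ (((n : ℤ) + 2) • β - γ) ≤ -2 := by
  induction n with
  | zero =>
    intro γ h0 h1 hn0 hn1
    simp only [Nat.cast_zero, zero_add] at *
    by_cases hle : ∀ i, γ i ≤ β i
    · exact decomp_low hβ hq le_rfl h0 hle hn0
    by_cases hge : ∀ i, β i ≤ γ i
    · have := decomp_low (γ := (2 : ℤ) • β - γ) hβ hq le_rfl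
        (fun i => by have := h1 i; simp; omega) (fun i => by have := hge i; simp; omega)
        (by intro h; exact hn1 (sub_eq_zero.mp h).symm)
      rw [sub_sub_cancel, bil_comm] at this
      exact this
    have t := trunc hβ h0 h1 le_rfl
    have d1 := decomp_one (γ := γ ⊓ β) hβ hq (fun i => le_inf (h0 i) (hβ.2.1 i))
      (fun i => inf_le_right) (by
        intro h
        apply hge
        exfalso
        apply hle
        intro i
        have := congrFun h i
        simp only [Pi.inf_apply, Pi.zero_apply] at this
        have b := hβ.2.1 i
        have c := h1 i
        rcases le_total (γ i) (β i) with h' | h'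
        · exact h'
        · rw [inf_eq_right.mpr h'] at this
          rw [this] at c ⊢
          simpa using c)
      (by intro h; exact hge (fun i => by
            have : γ ⊓ β ≤ γ := inf_le_left
            rw [h] at this; exact this i))
    have d2 := decomp_one (γ := γ - γ ⊓ β) hβ hq
      (fun i => by
        have : (γ ⊓ β) i ≤ γ i := (inf_le_left : γ ⊓ β ≤ γ) i
        simp only [Pi.sub_apply]; omega)
      (fun i => by
        have b := hβ.2.1 i
        have c := h1 i
        simp only [Pi.sub_apply, Pi.inf_apply]
        rcases le_total (γ i) (β i) with h' | h'
        · rw [inf_eq_left.mpr h']; omega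
        · rw [inf_eq_right.mpr h']; omega)
      (by
        intro h
        apply hle
        have : γ = γ ⊓ β := sub_eq_zero.mp h
        exact fun i => (inf_eq_left.mp this.symm) i)
      (by
        intro h
        apply hge
        intro i
        have b := hβ.2.1 i
        have := congrFun h i
        simp only [Pi.sub_apply, Pi.inf_apply] at this
        rcases le_total (γ i) (β i) with h' | h'
        · rw [inf_eq_left.mpr h'] at this; have := h0 i; omega
        · exact h')
    have e : ((2 : ℤ) - 1) • β = β := by norm_num
    rw [e] at t
    linarith
  | succ n ih =>
    intro γ h0 h1 hn0 hn1
    push_cast at h1 hn1 ⊢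
    by_cases hle : ∀ i, γ i ≤ β i
    · exact decomp_low hβ hq (by omega) h0 hle hn0
    have t := trunc hβ h0 h1 (by omega)
    have e : ((n : ℤ) + 1 + 2 - 1) = (n : ℤ) + 2 := by ring
    rw [e] at t
    have n1 : Q.bil (γ ⊓ β) (β - γ ⊓ β) ≤ 0 := by
      by_cases c0 : γ ⊓ β = 0
      · rw [c0]
        have := bil_smul_left Q 0 0 (β - 0)
        simp only [zero_smul, zero_mul] at this
        exact this.le
      by_cases c1 : γ ⊓ β = β
      · rw [c1, sub_self]
        have := bil_smul_right Q 0 β 0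
        simp only [zero_smul, zero_mul] at this
        exact this.le
      have := decomp_one (γ := γ ⊓ β) hβ hq (fun i => le_inf (h0 i) (hβ.2.1 i))
        (fun i => inf_le_right) c0 c1
      omega
    have d2 := ih (γ - γ ⊓ β)
      (fun i => by
        have : (γ ⊓ β) i ≤ γ i := (inf_le_left : γ ⊓ β ≤ γ) i
        simp only [Pi.sub_apply]; omega)
      (fun i => by
        have b := hβ.2.1 i
        have c := h1 i
        simp only [Pi.sub_apply, Pi.inf_apply]
        rcases le_total (γ i) (β i) with h' | h'
        · rw [inf_eq_left.mpr h', sub_self]; positivity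
        · rw [inf_eq_right.mpr h']; linarith)
      (by
        intro h
        apply hle
        have : γ = γ ⊓ β := sub_eq_zero.mp h
        exact fun i => (inf_eq_left.mp this.symm) i)
      (by
        intro h
        apply hn1
        funext i
        have b := hβ.2.1 i
        have c := h0 i
        have := congrFun h i
        simp only [Pi.sub_apply, Pi.inf_apply, Pi.smul_apply, smul_eq_mul] at this ⊢
        rcases le_total (γ i) (β i) with h' | h'
        · rw [inf_eq_left.mpr h', sub_self] at this
          have b0 : β i = 0 := by
            rcases mul_eq_zero.mp this.symm with h | h
            · omega
            · exact h
          rw [b0] at h' ⊢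
          rw [mul_zero]; omega
        · rw [inf_eq_right.mpr h'] at this; linarith)
    linarith

/-- Multiples of vectors in the fundamental region: the strict inequality. -/
lemma fund_ineq {β : Q.I → ℤ} (hβ : Q.InFund β) (hq : Q.bil β β < 0) {m : ℕ} (hm : 2 ≤ m)
    {n : ℕ} (hn : 2 ≤ n) (γ : Fin n → Q.I → ℤ) (h0 : ∀ j i, 0 ≤ γ j i) (hne : ∀ j, γ j ≠ 0)
    (hsum : m • β = ∑ j, γ j) : (∑ j, Q.pp (γ j)) < Q.pp (m • β) := by
  have hle : ∀ j, γ j ≤ m • β := by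
    intro j
    rw [hsum]
    exact Finset.single_le_sum (f := γ) (fun k _ => fun i => h0 k i) (Finset.mem_univ j)
  have hneq : ∀ j, γ j ≠ m • β := by
    intro j hj
    obtain ⟨k, hk⟩ : ∃ k : Fin n, k ≠ j := by
      have : Nontrivial (Fin n) := Fin.nontrivial_iff_two_le.mpr hn
      exact exists_ne j
    apply hne k
    have h1 : γ j + γ k ≤ ∑ j, γ j := by
      have := Finset.sum_le_sum_of_subset_of_nonneg (f := γ) (Finset.subset_univ {j, k})
        (fun l _ _ => fun i => h0 l i)
      rwa [Finset.sum_pair hk.symm] at this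
    rw [← hsum, hj] at h1
    funext i
    have a1 := h1 i
    have a2 := h0 k i
    simp only [Pi.add_apply, Pi.zero_apply] at *
    omega
  have key : ∀ j, Q.bil (γ j) (m • β - γ j) ≤ -2 := by
    intro j
    obtain ⟨n', rfl⟩ := Nat.exists_eq_add_of_le' hm
    have e : (n' + 2) • β = ((n' : ℤ) + 2) • β := by
      rw [← natCast_zsmul]; push_cast; rfl
    have := decomp_two hβ hq n' (γ j) (h0 j)
      (fun i => by have := hle j i; rw [e] at this; simpa using this) (hne j) (by rw [← e]; exact hneq j)
    rw [e]; exact this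
  have tot : ∑ j, Q.bil (γ j) (m • β - γ j) = Q.bil (m • β) (m • β) - ∑ j, Q.bil (γ j) (γ j) := by
    simp only [bil_sub_right]
    rw [Finset.sum_sub_distrib, ← bil_sum_left, ← hsum]
  have tot2 : ∑ j, Q.bil (γ j) (m • β - γ j) ≤ ∑ j : Fin n, (-2 : ℤ) :=
    Finset.sum_le_sum fun j _ => key j
  have card : ∑ j : Fin n, (-2 : ℤ) = n * (-2) := by simp
  rw [tot, card] at tot2
  have p1 : 2 * ∑ j, Q.pp (γ j) = 2 * n - ∑ j, Q.bil (γ j) (γ j) := by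
    rw [Finset.mul_sum]
    simp only [two_pp]
    rw [Finset.sum_sub_distrib]
    simp only [Finset.sum_const, Finset.card_univ, Fintype.card_fin, nsmul_eq_mul]
    ring
  have p2 := two_pp Q (m • β)
  linarith

/-! ### Reduction by admissible reflections -/

variable {K : Type} [Field K]

lemma pair_sub (l : Q.I → K) (α β : Q.I → ℤ) :
    Q.pair K l (α - β) = Q.pair K l α - Q.pair K l β := by
  unfold pair
  rw [← Finset.sum_sub_distrib]
  exact Finset.sum_congr rfl fun i _ => by simp only [Pi.sub_apply]; push_cast; ring

lemma pair_smul (l : Q.I → K) (c : ℤ) (α : Q.I → ℤ) :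
    Q.pair K l (c • α) = c * Q.pair K l α := by
  unfold pair
  rw [Finset.mul_sum]
  exact Finset.sum_congr rfl fun i _ => by
    simp only [Pi.smul_apply, smul_eq_mul]; push_cast; ring

lemma pair_ev (l : Q.I → K) (i : Q.I) : Q.pair K l (Q.ev i) = l i := by
  simp [pair, ev]

lemma bil_expand (α : Q.I → ℤ) (i : Q.I) :
    Q.bil α (Q.ev i) = ∑ j, α j * Q.bil (Q.ev i) (Q.ev j) := by
  have e : α = ∑ j, α j • Q.ev j := by
    funext k
    simp [Finset.sum_apply, ev]
  conv_lhs => rw [bil_comm, e]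
  rw [show Q.bil (Q.ev i) (∑ j, α j • Q.ev j) = ∑ j, Q.bil (Q.ev i) (α j • Q.ev j) from
    map_sum (AddMonoidHom.mk' (Q.bil (Q.ev i)) (bil_add_right Q (Q.ev i))) _ Finset.univ]
  simp only [bil_smul_right]

lemma pair_coRefl (l : Q.I → K) (i : Q.I) (α : Q.I → ℤ) :
    Q.pair K (Q.coRefl K i l) α = Q.pair K l α - Q.bil α (Q.ev i) * l i := by
  rw [bil_expand]
  unfold pair coRefl
  push_cast
  rw [Finset.sum_mul, ← Finset.sum_sub_distrib]
  exact Finset.sum_congr rfl fun i _ => by ring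

lemma pair_coRefl_sr (l : Q.I → K) (i : Q.I) (hi : Q.Loopfree i) (α : Q.I → ℤ) :
    Q.pair K (Q.coRefl K i l) (Q.sr i α) = Q.pair K l α := by
  rw [pair_coRefl, sr_apply, pair_sub, pair_smul, pair_ev, bil_sub_left, bil_smul_left,
    bil_ev_ev_self Q i hi]
  push_cast
  ring

lemma coRefl_self (l : Q.I → K) (i : Q.I) (hi : Q.Loopfree i) :
    Q.coRefl K i l i = - l i := by
  unfold coRefl
  rw [bil_ev_ev_self Q i hi]
  push_cast
  ring

lemma coRefl_coRefl (l : Q.I → K) (i : Q.I) (hi : Q.Loopfree i) :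
    Q.coRefl K i (Q.coRefl K i l) = l := by
  funext j
  have := coRefl_self l i hi
  conv_lhs => unfold coRefl
  rw [bil_ev_ev_self Q i hi]
  push_cast
  ring

lemma Rplus_sr {l : Q.I → K} {i : Q.I} (hi : Q.Loopfree i) (hl : l i ≠ 0) {α : Q.I → ℤ}
    (hα : α ∈ Q.Rplus K l) : Q.sr i α ∈ Q.Rplus K (Q.coRefl K i l) := by
  obtain ⟨h1, h2⟩ := hα
  refine ⟨posRoot_sr h1 hi ?_, by rw [pair_coRefl_sr l i hi, h2]⟩
  rintro rfl
  rw [pair_ev] at h2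
  exact hl h2

lemma Sigma_sr {l : Q.I → K} {i : Q.I} (hi : Q.Loopfree i) (hl : l i ≠ 0) {α : Q.I → ℤ}
    (hα : α ∈ Q.SigmaSet K l) : Q.sr i α ∈ Q.SigmaSet K (Q.coRefl K i l) := by
  obtain ⟨h1, h2⟩ := hα
  refine ⟨Rplus_sr hi hl h1, ?_⟩
  intro n γ hn hγ hsum
  have hl' : Q.coRefl K i l i ≠ 0 := by rw [coRefl_self l i hi]; exact neg_ne_zero.mpr hl
  have := h2 n (fun j => Q.sr i (γ j)) hn
    (fun j => by
      have := Rplus_sr hi hl' (hγ j)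
      rwa [coRefl_coRefl l i hi] at this)
    (by rw [← map_sum, ← hsum, sr_sr Q i hi])
  simp only [pp_sr Q i hi] at this
  rw [pp_sr Q i hi]
  exact this

lemma main_aux (N : ℕ) : ∀ (l : Q.I → K) (β : Q.I → ℤ), (∑ i, β i) = N →
    β ∈ Q.SigmaSet K l → 1 < Q.pp β → ∀ m : ℕ, 2 ≤ m → m • β ∈ Q.SigmaSet K l := by
  induction N using Nat.strong_induction_on with
  | _ N ih =>
  intro l β hN hβ hp m hm
  have hq : Q.bil β β < 0 := by have := two_pp Q β; omega
  by_cases hanti : ∀ i, Q.bil β (Q.ev i) ≤ 0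
  · have hF := inFund_of_antidom hβ.1.1 hq hanti
    refine ⟨⟨posRoot_smul hβ.1.1 hq (by omega), ?_⟩, ?_⟩
    · rw [← natCast_zsmul, pair_smul, hβ.1.2, mul_zero]
    · intro n γ hn hγ hsum
      exact fund_ineq hF hq hm hn γ (fun j => (hγ j).1.2.1) (fun j => (hγ j).1.2.2) hsum
  · push Not at hanti
    obtain ⟨i, hb⟩ := hanti
    have hi : Q.Loopfree i := by
      by_contra h
      have := bil_ev_loop Q β hβ.1.1.2.1 i h
      omega
    have hne : β ≠ Q.ev i := by
      rintro rfl
      rw [bil_ev_ev_self Q i hi] at hq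
      omega
    have hpos := posRoot_sr hβ.1.1 hi hne
    have hl : l i ≠ 0 := by
      intro hl
      have hevR : Q.ev i ∈ Q.Rplus K l := by
        refine ⟨⟨IsRoot.simple i hi, ev_nonneg i, ?_⟩, by rw [pair_ev, hl]⟩
        intro h
        have := congrFun h i
        simp [ev] at this
      have hsR : Q.sr i β ∈ Q.Rplus K l := by
        refine ⟨hpos, ?_⟩
        rw [sr_apply, pair_sub, pair_smul, pair_ev, hl, hβ.1.2]
        simp
      obtain ⟨c, hc⟩ := Int.eq_ofNat_of_zero_le hb.le
      have := hβ.2 (c + 1) (Fin.cons (Q.sr i β) fun _ => Q.ev i) (by omega)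
        (fun j => by
          refine Fin.cases ?_ (fun k => ?_) j
          · simpa using hsR
          · simpa using hevR)
        (by
          rw [Fin.sum_univ_succ]
          simp only [Fin.cons_zero, Fin.cons_succ, Finset.sum_const, Finset.card_univ,
            Fintype.card_fin]
          rw [sr_apply, hc, ← natCast_zsmul]
          simp)
      rw [Fin.sum_univ_succ] at this
      simp only [Fin.cons_zero, Fin.cons_succ, pp_sr Q i hi] at this
      have p0 : Q.pp (Q.ev i) = 0 := by
        have := two_pp Q (Q.ev i)
        rw [bil_ev_ev_self Q i hi] at this
        omega
      rw [p0] at this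
      simp at this
    have hl' : Q.coRefl K i l i ≠ 0 := by rw [coRefl_self l i hi]; exact neg_ne_zero.mpr hl
    have hS := Sigma_sr hi hl hβ
    have hsumlt : (∑ k, Q.sr i β k) < N := by
      rw [← hN, sr_apply]
      simp only [Pi.sub_apply, Pi.smul_apply, smul_eq_mul]
      rw [Finset.sum_sub_distrib, ← Finset.mul_sum]
      have : ∑ k, Q.ev i k = 1 := by simp [ev]
      rw [this]; omega
    have hsum0 : 0 ≤ ∑ k, Q.sr i β k := Finset.sum_nonneg fun k _ => hpos.2.1 k
    obtain ⟨N', hN'⟩ := Int.eq_ofNat_of_zero_le hsum0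
    have := ih N' (by omega) _ _ hN' hS (by rw [pp_sr Q i hi]; exact hp) m hm
    have := Sigma_sr hi hl' this
    rwa [coRefl_coRefl l i hi, map_nsmul, sr_sr Q i hi] at this

end Helper2

end FinQuiver


/-- if `β` is a non-isotropic imaginary root (`p(β) > 1`) in `Σ_λ`,
then every positive multiple `m β` is also in `Σ_λ`. -/
theorem stmt5 (Q : FinQuiver) (K : Type) [Field K] [CharZero K] [IsAlgClosed K]
    (l : Q.I → K) (β : Q.I → ℤ)
    (hβ : β ∈ Q.SigmaSet K l) (hni : 1 < Q.pp β)
    (m : ℕ) (hm : 1 ≤ m) :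
    m • β ∈ Q.SigmaSet K l := by
  rcases Nat.lt_or_ge m 2 with h | h
  · have : m = 1 := by omega
    rw [this, one_smul]; exact hβ
  · obtain ⟨N, hN⟩ := Int.eq_ofNat_of_zero_le
      (Finset.sum_nonneg fun k (_ : k ∈ Finset.univ) => hβ.1.1.2.1 k)
    exact FinQuiver.main_aux N l β hN hβ hni m h

end
end

section
/- If the pair (ν,β) is obtained from the pair (λ,α) by a sequence of admissible reflections, then there is an isomorphism of varieties N(ν,β) ≅ N(λ,α). -/
open scoped BigOperators

noncomputable section

namespace RF

section abstract_lemmas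

/-- A correspondence between two spaces which transfers functions both ways gives an
isomorphism of function algebras. -/
theorem corrEquiv {K V W : Type} [Field K] (B : Subalgebra K (V → K)) (B' : Subalgebra K (W → K))
    (C : V → W → Prop) (tot1 : ∀ v, ∃ w, C v w) (tot2 : ∀ w, ∃ v, C v w)
    (t1 : ∀ f ∈ B, ∃ f' ∈ B', ∀ v w, C v w → f v = f' w)
    (t2 : ∀ f' ∈ B', ∃ f ∈ B, ∀ v w, C v w → f v = f' w) :
    Nonempty (B ≃ₐ[K] B') := by
  choose F hF hFC using t1
  choose G hG hGC using t2
  have u1 : ∀ f g : V → K, (∀ v w, C v w → f v = g v) → f = g := by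
    intro f g h; funext v; obtain ⟨w, hw⟩ := tot1 v; exact h v w hw
  have u2 : ∀ f g : W → K, (∀ v w, C v w → f w = g w) → f = g := by
    intro f g h; funext w; obtain ⟨v, hv⟩ := tot2 w; exact h v w hv
  refine ⟨AlgEquiv.ofLinearEquiv (LinearEquiv.mk
    { toFun := fun f => (⟨F f.1 f.2, hF f.1 f.2⟩ : B')
      map_add' := ?_
      map_smul' := ?_ } (fun f => (⟨G f.1 f.2, hG f.1 f.2⟩ : B)) ?_ ?_) ?_ ?_⟩
  · intro x y
    apply Subtype.ext
    apply u2
    intro v w h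
    change F (x.1 + y.1) _ w = F x.1 _ w + F y.1 _ w
    rw [← hFC _ _ v w h, ← hFC _ _ v w h, ← hFC _ _ v w h]; rfl
  · intro c x
    apply Subtype.ext
    apply u2
    intro v w h
    change F (c • x.1) _ w = c * F x.1 _ w
    rw [← hFC _ _ v w h, ← hFC _ _ v w h]; rfl
  · intro x
    apply Subtype.ext
    apply u1
    intro v w h
    change G (F x.1 _) _ v = x.1 v
    rw [hGC _ _ v w h, ← hFC _ _ v w h]
  · intro x
    apply Subtype.ext
    apply u2
    intro v w h
    change F (G x.1 _) _ w = x.1 w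
    rw [← hFC _ _ v w h, hGC _ _ v w h]
  · apply Subtype.ext
    apply u2
    intro v w h
    change F 1 _ w = 1
    rw [← hFC _ _ v w h]; rfl
  · intro x y
    apply Subtype.ext
    apply u2
    intro v w h
    change F (x.1 * y.1) _ w = F x.1 _ w * F y.1 _ w
    rw [← hFC _ _ v w h, ← hFC _ _ v w h, ← hFC _ _ v w h]; rfl

/-- Transfer of functions generated by a set along a correspondence. -/
theorem adjoin_transfer {K V W : Type} [Field K] (G : Set (V → K)) (O : Subalgebra K (W → K))
    (C : V → W → Prop) (hG : ∀ c ∈ G, ∃ c' ∈ O, ∀ v w, C v w → c v = c' w) :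
    ∀ f ∈ Algebra.adjoin K G, ∃ f' ∈ O, ∀ v w, C v w → f v = f' w := by
  intro f hf
  induction hf using Algebra.adjoin_induction with
  | mem x hx => exact hG x hx
  | algebraMap r => exact ⟨algebraMap K _ r, O.algebraMap_mem r, fun _ _ _ => rfl⟩
  | add x y _ _ hx hy =>
    obtain ⟨a, ha, hx⟩ := hx
    obtain ⟨b, hb, hy⟩ := hy
    exact ⟨a + b, O.add_mem ha hb, fun v w h => by simp [hx v w h, hy v w h]⟩
  | mul x y _ _ hx hy =>
    obtain ⟨a, ha, hx⟩ := hx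
    obtain ⟨b, hb, hy⟩ := hy
    exact ⟨a * b, O.mul_mem ha hb, fun v w h => by simp [hx v w h, hy v w h]⟩

/-- Local descent of an invariant function. -/
theorem local_descent {K V : Type} [Field K] (G : Set (V → K)) (A : Subalgebra K (V → K))
    (d : V → K) (hd : d ∈ A) (φ : V → V)
    (hG : ∀ c ∈ G, ∃ N : ℕ, ∃ a ∈ A, ∀ v, d v ≠ 0 → d v ^ N * c (φ v) = a v)
    (f : V → K) (hf : f ∈ Algebra.adjoin K G) (hφ : ∀ v, d v ≠ 0 → f (φ v) = f v) :
    ∃ N : ℕ, d ^ N * f ∈ A := by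
  have key : ∃ N : ℕ, ∃ a ∈ A, ∀ v, d v ≠ 0 → d v ^ N * f (φ v) = a v := by
    clear hφ
    induction hf using Algebra.adjoin_induction with
    | mem x hx => exact hG x hx
    | algebraMap r => exact ⟨0, algebraMap K _ r, A.algebraMap_mem r, fun v _ => by simp⟩
    | add x y _ _ hx hy =>
      obtain ⟨n, a, ha, hx⟩ := hx
      obtain ⟨m, b, hb, hy⟩ := hy
      refine ⟨n + m, d ^ m * a + d ^ n * b,
        A.add_mem (A.mul_mem (A.pow_mem hd m) ha) (A.mul_mem (A.pow_mem hd n) hb), fun v h => ?_⟩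
      simp only [Pi.add_apply, Pi.mul_apply, Pi.pow_apply, ← hx v h, ← hy v h]
      ring
    | mul x y _ _ hx hy =>
      obtain ⟨n, a, ha, hx⟩ := hx
      obtain ⟨m, b, hb, hy⟩ := hy
      refine ⟨n + m, a * b, A.mul_mem ha hb, fun v h => ?_⟩
      simp only [Pi.mul_apply, ← hx v h, ← hy v h]
      ring
  obtain ⟨N, a, ha, h⟩ := key
  refine ⟨N + 1, ?_⟩
  have : d ^ (N + 1) * f = d * a := by
    funext v
    by_cases hv : d v = 0
    · simp [hv]
    · simp only [Pi.mul_apply, Pi.pow_apply, ← h v hv, hφ v hv]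
      ring
  rw [this]
  exact A.mul_mem hd ha

/-- Gluing. -/
theorem glue {K V ι : Type} [Field K] [Fintype ι] (A : Subalgebra K (V → K))
    (d : ι → V → K) (hd : ∀ s, d s ∈ A) (c : K) (hc : c ≠ 0) (hsum : ∀ v, ∑ s, d s v = c)
    (f : V → K) (hf : ∀ s, ∃ N : ℕ, d s ^ N * f ∈ A) : f ∈ A := by
  let M' : Submodule A (V → K) := (⊥ : Subalgebra A (V → K)).toSubmodule
  have hM' : ∀ g : V → K, g ∈ M' ↔ g ∈ A := by
    intro g
    simp only [M', Subalgebra.mem_toSubmodule, Algebra.mem_bot, Set.mem_range]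
    constructor
    · rintro ⟨y, rfl⟩; exact y.2
    · intro h; exact ⟨⟨g, h⟩, rfl⟩
  rw [← hM']
  refine Submodule.mem_of_span_eq_top_of_smul_pow_mem M'
    (Set.range fun s => (⟨d s, hd s⟩ : A)) ?_ f ?_
  · rw [Ideal.eq_top_iff_one]
    have : (1 : A) = algebraMap K A c⁻¹ * ∑ s, (⟨d s, hd s⟩ : A) := by
      apply Subtype.ext
      funext v
      have := hsum v
      simp only [MulMemClass.coe_mul, AddSubmonoidClass.coe_finsetSum, Pi.mul_apply,
        Finset.sum_apply, this]
      change 1 = c⁻¹ * c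
      rw [inv_mul_cancel₀ hc]
    rw [this]
    exact Ideal.mul_mem_left _ _ (Ideal.sum_mem _ fun s _ => Ideal.subset_span ⟨s, rfl⟩)
  · rintro ⟨_, s, rfl⟩
    obtain ⟨N, hN⟩ := hf s
    refine ⟨N, ?_⟩
    rw [hM']
    exact hN

open Matrix in
theorem det_mul_expand {K S : Type} [Field K] [Fintype S] [DecidableEq S] (n : ℕ)
    (p : Matrix (Fin n) S K) (q : Matrix S (Fin n) K) :
    (p * q).det = ∑ σ : Fin n → S, (∏ k, p k (σ k)) * (q.submatrix σ id).det := by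
  have h1 : p * q = fun k => ∑ s, p k s • q s := by
    ext k j
    simp [Matrix.mul_apply, Finset.sum_apply]
  rw [h1]
  change Matrix.detRowAlternating.toMultilinearMap (fun k => ∑ s, p k s • q s) = _
  rw [MultilinearMap.map_sum]
  refine Finset.sum_congr rfl fun σ _ => ?_
  rw [MultilinearMap.map_smul_univ]
  rfl

open Matrix in
theorem sum_minors {K S : Type} [Field K] [Fintype S] [DecidableEq S] (n : ℕ)
    (p : Matrix (Fin n) S K) (q : Matrix S (Fin n) K) :
    ∑ σ : Fin n → S, (q.submatrix σ id).det * (p.submatrix id σ).det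
      = (n.factorial : K) * (p * q).det := by
  have h : ∀ π : Equiv.Perm (Fin n), ∑ σ : Fin n → S, (q.submatrix σ id).det *
      ((Equiv.Perm.sign π : ℤ) * ∏ k, p (π k) (σ k)) = (p * q).det := by
    intro π
    rw [det_mul_expand]
    rw [← Equiv.sum_comp (Equiv.arrowCongr π.symm (Equiv.refl S))]
    refine Finset.sum_congr rfl fun σ _ => ?_
    have e1 : (q.submatrix ((Equiv.arrowCongr π.symm (Equiv.refl S)) σ) id)
        = (q.submatrix σ id).submatrix π id := rfl
    rw [e1, Matrix.det_permute]
    have e2 : ∏ k, p (π k) ((Equiv.arrowCongr π.symm (Equiv.refl S)) σ k)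
        = ∏ k, p k (σ k) := Equiv.prod_comp π (fun k => p k (σ k))
    rw [e2]
    have e3 : ((Equiv.Perm.sign π : ℤ) : K) * ((Equiv.Perm.sign π : ℤ) : K) = 1 := by
      rw [← Int.cast_mul, ← Units.val_mul, Int.units_mul_self]; simp
    linear_combination (∏ k, p k (σ k)) * (q.submatrix σ id).det * e3
  simp_rw [Matrix.det_apply' (p.submatrix id _), Finset.mul_sum]
  rw [Finset.sum_comm]
  simp only [Matrix.submatrix_apply, id]
  rw [Finset.sum_congr rfl fun π _ => h π]
  simp [Fintype.card_perm]

open Matrix in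
/-- Factorization of an idempotent matrix. -/
theorem idem_factor {K S : Type} [Field K] [Fintype S] [DecidableEq S]
    (T : Matrix S S K) (hT : T * T = T) :
    ∃ (r : ℕ) (u : Matrix S (Fin r) K) (w : Matrix (Fin r) S K), u * w = T ∧ w * u = 1 := by
  let L := Matrix.toLin' T
  have hL : ∀ x, L (L x) = L x := by
    intro x
    simp only [L, Matrix.toLin'_apply, Matrix.mulVec_mulVec, hT]
  let b := Module.finBasis K (LinearMap.range L)
  let e := b.equivFun
  let U : (Fin _ → K) →ₗ[K] (S → K) := (LinearMap.range L).subtype ∘ₗ e.symm.toLinearMap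
  let Wl : (S → K) →ₗ[K] (Fin _ → K) := e.toLinearMap ∘ₗ L.rangeRestrict
  refine ⟨_, LinearMap.toMatrix' U, LinearMap.toMatrix' Wl, ?_, ?_⟩
  · rw [← LinearMap.toMatrix'_comp]
    have : U ∘ₗ Wl = L := by
      ext x; simp [U, Wl]
    rw [this]; simp [L]
  · rw [← LinearMap.toMatrix'_comp]
    have : Wl ∘ₗ U = LinearMap.id := by
      apply LinearMap.ext
      intro x
      simp only [U, Wl, LinearMap.comp_apply, LinearEquiv.coe_coe, LinearMap.id_apply]
      rw [← LinearEquiv.eq_symm_apply]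
      apply Subtype.ext
      obtain ⟨y, hy⟩ := (e.symm x).2
      change L (e.symm x).1 = (e.symm x).1
      rw [← hy, hL]
    rw [this]; simp

end abstract_lemmas

end RF

namespace RF
open Matrix

section padding

variable {K : Type} [Field K]

/-- Inclusion matrix `K^n → K^B`. -/
def Jm (K : Type) [Field K] (B n : ℕ) : Matrix (Fin B) (Fin n) K :=
  Matrix.of fun r k => if r.1 = k.1 then 1 else 0

/-- The projection of `K^B` to the first `n` coordinates. -/
def Em (K : Type) [Field K] (B n : ℕ) : Matrix (Fin B) (Fin B) K :=
  Matrix.diagonal fun k => if k.1 < n then 1 else 0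

theorem Jt_mul_J {B n : ℕ} (h : n ≤ B) : (Jm K B n)ᵀ * Jm K B n = 1 := by
  ext r s
  simp only [Matrix.mul_apply, Jm, Matrix.transpose_apply, Matrix.of_apply, Matrix.one_apply]
  rw [Finset.sum_eq_single (Fin.castLE h r)]
  · by_cases hrs : r = s
    · simp [hrs]
    · have : ¬ r.1 = s.1 := fun h' => hrs (Fin.ext h')
      simp [hrs, this]
  · intro b _ hb
    have : b.1 ≠ r.1 := fun h' => hb (Fin.ext h')
    simp [this]
  · simp

theorem J_mul_Jt (B n : ℕ) : Jm K B n * (Jm K B n)ᵀ = Em K B n := by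
  ext r s
  simp only [Matrix.mul_apply, Jm, Em, Matrix.transpose_apply, Matrix.of_apply,
    Matrix.diagonal_apply]
  by_cases hr : r.1 < n
  · rw [Finset.sum_eq_single ⟨r.1, hr⟩]
    · by_cases hrs : r = s
      · simp [hrs, hrs ▸ hr]
      · have : ¬ s.1 = r.1 := fun h' => hrs (Fin.ext h'.symm)
        simp [hrs, this]
    · intro b _ hb
      have : r.1 ≠ b.1 := fun h' => hb (Fin.ext h'.symm)
      simp [this]
    · simp
  · rw [Finset.sum_eq_zero]
    · simp [hr]
    · intro b _
      have : r.1 ≠ b.1 := fun h' => hr (h' ▸ b.2)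
      simp [this]

theorem Em_mul_Em (B n : ℕ) : Em K B n * Em K B n = Em K B n := by
  rw [Em, Matrix.diagonal_mul_diagonal]
  congr 1; ext k; split_ifs <;> simp

theorem Em_mul_J {B n : ℕ} (h : n ≤ B) : Em K B n * Jm K B n = Jm K B n := by
  rw [← J_mul_Jt, Matrix.mul_assoc, Jt_mul_J h, Matrix.mul_one]

theorem Jt_mul_Em {B n : ℕ} (h : n ≤ B) : (Jm K B n)ᵀ * Em K B n = (Jm K B n)ᵀ := by
  rw [← J_mul_Jt, ← Matrix.mul_assoc, Jt_mul_J h, Matrix.one_mul]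

theorem trace_Em {B n : ℕ} (h : n ≤ B) : (Em K B n).trace = n := by
  rw [← J_mul_Jt, Matrix.trace_mul_comm, Jt_mul_J h]; simp

end padding

variable (Q : FinQuiver) (K : Type) [Field K]

/-- The sign of an arrow of the double quiver. -/
def eps (a : Q.DA) : K := Sum.elim (fun _ => 1) (fun _ => -1) a

/-- The reverse arrow. -/
def star (a : Q.DA) : Q.DA := Sum.swap a

@[simp] theorem star_star (a : Q.DA) : star Q (star Q a) = a := Sum.swap_swap a
@[simp] theorem dh_star (a : Q.DA) : Q.dh (star Q a) = Q.dt a := by rcases a with a | a <;> rfl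
@[simp] theorem dt_star (a : Q.DA) : Q.dt (star Q a) = Q.dh a := by rcases a with a | a <;> rfl
@[simp] theorem eps_star (a : Q.DA) : eps Q K (star Q a) = - eps Q K a := by
  rcases a with a | a <;> simp [eps, star]
@[simp] theorem eps_mul (a : Q.DA) : eps Q K a * eps Q K a = 1 := by
  rcases a with a | a <;> simp [eps]

/-- Padded representations. -/
abbrev PRep (B : ℕ) : Type := Q.DA → Matrix (Fin B) (Fin B) K

/-- Padded moment map. -/
def pmom (B : ℕ) (X : PRep Q K B) (j : Q.I) : Matrix (Fin B) (Fin B) K :=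
  ∑ a : Q.DA, if Q.dh a = j then eps Q K a • (X a * X (star Q a)) else 0

/-- Padded moment fibre. -/
def PFib (B : ℕ) (l : Q.I → K) (α : Q.I → ℕ) : Set (PRep Q K B) :=
  {X | (∀ a, Em K B (α (Q.dh a)) * X a = X a ∧ X a * Em K B (α (Q.dt a)) = X a) ∧
    ∀ j, pmom Q K B X j = l j • Em K B (α j)}

/-- `g` and `h` are mutually inverse padded group elements. -/
structure PInv (B : ℕ) (α : Q.I → ℕ) (g h : Q.I → Matrix (Fin B) (Fin B) K) : Prop where
  gh : ∀ j, g j * h j = Em K B (α j)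
  hg : ∀ j, h j * g j = Em K B (α j)
  Eg : ∀ j, Em K B (α j) * g j = g j
  gE : ∀ j, g j * Em K B (α j) = g j
  Eh : ∀ j, Em K B (α j) * h j = h j
  hE : ∀ j, h j * Em K B (α j) = h j

/-- Padded orbit relation. -/
def POrb (B : ℕ) (α : Q.I → ℕ) (X Y : PRep Q K B) : Prop :=
  ∃ g h, PInv Q K B α g h ∧ ∀ a, Y a = g (Q.dh a) * X a * h (Q.dt a)

/-- Coordinate functions. -/
def PCoord (B : ℕ) (l : Q.I → K) (α : Q.I → ℕ) : Set (PFib Q K B l α → K) :=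
  Set.range fun (c : Q.DA × Fin B × Fin B) (X : PFib Q K B l α) => X.1 c.1 c.2.1 c.2.2

/-- Padded invariant ring. -/
def PInvRing (B : ℕ) (l : Q.I → K) (α : Q.I → ℕ) : Subalgebra K (PFib Q K B l α → K) :=
  Algebra.adjoin K (PCoord Q K B l α) ⊓
    relInv K (fun X Y : PFib Q K B l α => POrb Q K B α X.1 Y.1)

/-- The padding map. -/
def pad (B : ℕ) (α : Q.I → ℕ) (v : Q.Rep K α) : PRep Q K B :=
  fun a => Jm K B (α (Q.dh a)) * v a * (Jm K B (α (Q.dt a)))ᵀ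

/-- The inverse of the padding map. -/
def unpad (B : ℕ) (α : Q.I → ℕ) (X : PRep Q K B) : Q.Rep K α :=
  fun a => (Jm K B (α (Q.dh a)))ᵀ * X a * Jm K B (α (Q.dt a))

variable {Q K}
variable {B : ℕ} {l : Q.I → K} {α : Q.I → ℕ}

theorem unpad_pad (hB : ∀ j, α j ≤ B) (v : Q.Rep K α) : unpad Q K B α (pad Q K B α v) = v := by
  funext a
  simp only [unpad, pad]
  calc _ = ((Jm K B (α (Q.dh a)))ᵀ * Jm K B (α (Q.dh a))) * v a *
        ((Jm K B (α (Q.dt a)))ᵀ * Jm K B (α (Q.dt a))) := by simp only [Matrix.mul_assoc]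
    _ = _ := by rw [Jt_mul_J (hB _), Jt_mul_J (hB _), Matrix.one_mul, Matrix.mul_one]

theorem pad_unpad (X : PRep Q K B)
    (hX : ∀ a, Em K B (α (Q.dh a)) * X a = X a ∧ X a * Em K B (α (Q.dt a)) = X a) :
    pad Q K B α (unpad Q K B α X) = X := by
  funext a
  simp only [unpad, pad]
  calc _ = (Jm K B (α (Q.dh a)) * (Jm K B (α (Q.dh a)))ᵀ) * X a *
        (Jm K B (α (Q.dt a)) * (Jm K B (α (Q.dt a)))ᵀ) := by simp only [Matrix.mul_assoc]
    _ = _ := by rw [J_mul_Jt, J_mul_Jt, (hX a).1, (hX a).2]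

theorem pad_supp (hB : ∀ j, α j ≤ B) (v : Q.Rep K α) (a : Q.DA) :
    Em K B (α (Q.dh a)) * pad Q K B α v a = pad Q K B α v a ∧
      pad Q K B α v a * Em K B (α (Q.dt a)) = pad Q K B α v a := by
  constructor
  · simp only [pad, ← Matrix.mul_assoc, Em_mul_J (hB _)]
  · simp only [pad, Matrix.mul_assoc, Jt_mul_Em (hB _)]

theorem pad_mul (hB : ∀ j, α j ≤ B) {m n : ℕ} (j : Q.I)
    (x : Matrix (Fin m) (Fin (α j)) K) (y : Matrix (Fin (α j)) (Fin n) K) :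
    (Jm K B m * x * (Jm K B (α j))ᵀ) * (Jm K B (α j) * y * (Jm K B n)ᵀ)
      = Jm K B m * (x * y) * (Jm K B n)ᵀ := by
  calc _ = Jm K B m * x * ((Jm K B (α j))ᵀ * Jm K B (α j)) * y * (Jm K B n)ᵀ := by
        simp only [Matrix.mul_assoc]
    _ = _ := by rw [Jt_mul_J (hB _), Matrix.mul_one]; simp only [Matrix.mul_assoc]

theorem pmom_pad (hB : ∀ j, α j ≤ B) (v : Q.Rep K α) (j : Q.I) :
    pmom Q K B (pad Q K B α v) j
      = Jm K B (α j) * Q.moment K α v j * (Jm K B (α j))ᵀ := by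
  have h1 : ∀ a : Q.A, (if Q.h a = j then eps Q K (Sum.inl a) •
      (pad Q K B α v (Sum.inl a) * pad Q K B α v (star Q (Sum.inl a))) else 0)
      = Jm K B (α j) * (if h : Q.h a = j then
      (v (Sum.inl a) * v (Sum.inr a)).submatrix
        (Fin.cast (congrArg α h).symm) (Fin.cast (congrArg α h).symm)
      else 0) * (Jm K B (α j))ᵀ := by
    intro a
    by_cases h : Q.h a = j
    · subst h
      simp only [if_true, dif_pos, eps, Sum.elim_inl, one_smul]
      exact pad_mul hB (Q.t a) (v (Sum.inl a)) (v (Sum.inr a))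
    · simp [h]
  have h2 : ∀ a : Q.A, (if Q.t a = j then eps Q K (Sum.inr a) •
      (pad Q K B α v (Sum.inr a) * pad Q K B α v (star Q (Sum.inr a))) else 0)
      = - (Jm K B (α j) * (if h : Q.t a = j then
      (v (Sum.inr a) * v (Sum.inl a)).submatrix
        (Fin.cast (congrArg α h).symm) (Fin.cast (congrArg α h).symm)
      else 0) * (Jm K B (α j))ᵀ) := by
    intro a
    by_cases h : Q.t a = j
    · subst h
      simp only [if_true, dif_pos, eps, Sum.elim_inr, neg_smul, one_smul]
      congr 1
      exact pad_mul hB (Q.h a) (v (Sum.inr a)) (v (Sum.inl a))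
    · simp [h]
  have e0 : pmom Q K B (pad Q K B α v) j = (∑ a : Q.A, (if Q.h a = j then eps Q K (Sum.inl a) •
      (pad Q K B α v (Sum.inl a) * pad Q K B α v (star Q (Sum.inl a))) else 0)) +
      ∑ a : Q.A, (if Q.t a = j then eps Q K (Sum.inr a) •
      (pad Q K B α v (Sum.inr a) * pad Q K B α v (star Q (Sum.inr a))) else 0) :=
    Fintype.sum_sum_type _
  rw [e0, Finset.sum_congr rfl fun a _ => h1 a, Finset.sum_congr rfl fun a _ => h2 a]
  rw [FinQuiver.moment, Matrix.mul_sub, Matrix.sub_mul, Matrix.mul_sum, Matrix.mul_sum,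
    Matrix.sum_mul, Matrix.sum_mul, Finset.sum_neg_distrib, sub_eq_add_neg]

theorem pad_mem (hB : ∀ j, α j ≤ B) (v : Q.Rep K α) :
    pad Q K B α v ∈ PFib Q K B l α ↔ v ∈ Q.MomentFiber K l α := by
  constructor
  · intro h j
    have := h.2 j
    rw [pmom_pad hB] at this
    have h2 : (Jm K B (α j))ᵀ * (Jm K B (α j) * Q.moment K α v j * (Jm K B (α j))ᵀ) * Jm K B (α j)
        = Q.moment K α v j := by
      calc _ = ((Jm K B (α j))ᵀ * Jm K B (α j)) * Q.moment K α v j *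
            ((Jm K B (α j))ᵀ * Jm K B (α j)) := by simp only [Matrix.mul_assoc]
        _ = _ := by rw [Jt_mul_J (hB _), Matrix.one_mul, Matrix.mul_one]
    rw [← h2, this, Matrix.mul_smul, Jt_mul_Em (hB _), Matrix.smul_mul, Jt_mul_J (hB _)]
  · intro h
    refine ⟨pad_supp hB v, fun j => ?_⟩
    rw [pmom_pad hB, h j, Matrix.mul_smul, Matrix.smul_mul, Matrix.mul_one, J_mul_Jt]

theorem coords_eq (V : Set (Q.Rep K α)) :
    Q.fnRing K α V = Algebra.adjoin K (Set.range
      (fun c : Q.Coords α => fun v : ↥V => v.1 c.1 c.2.1 c.2.2)) := by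
  rw [Algebra.adjoin_range_eq_range_aeval]; rfl

theorem orb_pad (hB : ∀ j, α j ≤ B) (v w : Q.Rep K α) :
    (∃ g : Q.Gl K α, w = Q.glAct K α g v) ↔
      POrb Q K B α (pad Q K B α v) (pad Q K B α w) := by
  constructor
  · rintro ⟨g, rfl⟩
    refine ⟨fun j => Jm K B (α j) * (g j).1 * (Jm K B (α j))ᵀ,
      fun j => Jm K B (α j) * ((g j)⁻¹ : Matrix.GeneralLinearGroup _ K).1 * (Jm K B (α j))ᵀ,
      ⟨?_, ?_, ?_, ?_, ?_, ?_⟩, ?_⟩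
    · intro j
      rw [pad_mul hB]
      have : (g j).1 * ((g j)⁻¹ : Matrix.GeneralLinearGroup _ K).1 = 1 := Units.mul_inv (g j)
      rw [this, Matrix.mul_one, J_mul_Jt]
    · intro j
      rw [pad_mul hB]
      have : ((g j)⁻¹ : Matrix.GeneralLinearGroup _ K).1 * (g j).1 = 1 := Units.inv_mul (g j)
      rw [this, Matrix.mul_one, J_mul_Jt]
    · intro j; simp only [← Matrix.mul_assoc, Em_mul_J (hB _)]
    · intro j; simp only [Matrix.mul_assoc, Jt_mul_Em (hB _)]
    · intro j; simp only [← Matrix.mul_assoc, Em_mul_J (hB _)]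
    · intro j; simp only [Matrix.mul_assoc, Jt_mul_Em (hB _)]
    · intro a
      simp only [pad]
      rw [pad_mul hB, pad_mul hB]
      rfl
  · rintro ⟨g, h, hgh, hY⟩
    have key : ∀ (j : Q.I) (x y : Matrix (Fin B) (Fin B) K), x * Em K B (α j) = x →
        x * y = Em K B (α j) →
        ((Jm K B (α j))ᵀ * x * Jm K B (α j)) * ((Jm K B (α j))ᵀ * y * Jm K B (α j)) = 1 := by
      intro j x y hx hxy
      calc _ = (Jm K B (α j))ᵀ * (x * (Jm K B (α j) * (Jm K B (α j))ᵀ) * y) * Jm K B (α j) := by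
            simp only [Matrix.mul_assoc]
        _ = _ := by rw [J_mul_Jt, hx, hxy, Jt_mul_Em (hB _), Jt_mul_J (hB _)]
    refine ⟨fun j => ⟨(Jm K B (α j))ᵀ * g j * Jm K B (α j), (Jm K B (α j))ᵀ * h j * Jm K B (α j),
      key j _ _ (hgh.gE j) (hgh.gh j), key j _ _ (hgh.hE j) (hgh.hg j)⟩, ?_⟩
    rw [← unpad_pad hB w, ← unpad_pad hB v]
    funext a
    have hs := pad_supp hB v a
    simp only [unpad, FinQuiver.glAct, hY a]
    change _ = ((Jm K B (α (Q.dh a)))ᵀ * g (Q.dh a) * Jm K B (α (Q.dh a))) *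
      ((Jm K B (α (Q.dh a)))ᵀ * pad Q K B α v a * Jm K B (α (Q.dt a))) *
      ((Jm K B (α (Q.dt a)))ᵀ * h (Q.dt a) * Jm K B (α (Q.dt a)))
    symm
    calc _ = (Jm K B (α (Q.dh a)))ᵀ * (g (Q.dh a) *
          (Jm K B (α (Q.dh a)) * (Jm K B (α (Q.dh a)))ᵀ)) * pad Q K B α v a *
          ((Jm K B (α (Q.dt a)) * (Jm K B (α (Q.dt a)))ᵀ) * h (Q.dt a)) * Jm K B (α (Q.dt a)) := by
            simp only [Matrix.mul_assoc]
      _ = _ := by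
        rw [J_mul_Jt, J_mul_Jt, hgh.gE, hgh.Eh]
        simp only [Matrix.mul_assoc]

theorem entry_mem {V : Type} (O : Subalgebra K (V → K)) {m n p q : ℕ}
    (x : Matrix (Fin m) (Fin n) K) (y : Matrix (Fin p) (Fin q) K)
    (f : V → Matrix (Fin n) (Fin p) K) (hf : ∀ r s, (fun v => f v r s) ∈ O) (r : Fin m)
    (s : Fin q) : (fun v => (x * f v * y) r s) ∈ O := by
  have : (fun v => (x * f v * y) r s)
      = ∑ k, (∑ k', x r k' • (fun v => f v k' k)) * algebraMap K (V → K) (y k s) := by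
    funext v
    simp [Matrix.mul_apply, Finset.sum_apply]
  rw [this]
  exact O.sum_mem fun k _ => O.mul_mem (O.sum_mem fun k' _ => O.smul_mem (hf _ _) _)
    (O.algebraMap_mem _)

theorem coord_mem (a : Q.DA) (r s : Fin B) :
    (fun X : PFib Q K B l α => X.1 a r s) ∈ Algebra.adjoin K (PCoord Q K B l α) :=
  Algebra.subset_adjoin ⟨(a, r, s), rfl⟩

theorem unpad_entry (a : Q.DA) (r : Fin (α (Q.dh a))) (s : Fin (α (Q.dt a))) :
    (fun X : PFib Q K B l α => unpad Q K B α X.1 a r s)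
      ∈ Algebra.adjoin K (PCoord Q K B l α) :=
  entry_mem (Algebra.adjoin K (PCoord Q K B l α)) (Jm K B (α (Q.dh a)))ᵀ (Jm K B (α (Q.dt a)))
    (fun X : PFib Q K B l α => X.1 a) (coord_mem a) r s

theorem coord_mem' (V : Set (Q.Rep K α)) (a : Q.DA) (r : Fin (α (Q.dh a)))
    (s : Fin (α (Q.dt a))) : (fun v : V => v.1 a r s) ∈ Q.fnRing K α V := by
  rw [coords_eq]
  exact Algebra.subset_adjoin (Set.mem_range_self
    (f := fun c : Q.Coords α => fun v : ↥V => v.1 c.1 c.2.1 c.2.2) ⟨a, r, s⟩)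

theorem pad_entry (V : Set (Q.Rep K α)) (a : Q.DA) (r s : Fin B) :
    (fun v : V => pad Q K B α v.1 a r s) ∈ Q.fnRing K α V :=
  entry_mem (Q.fnRing K α V) (Jm K B (α (Q.dh a))) (Jm K B (α (Q.dt a)))ᵀ
    (fun v : V => v.1 a) (coord_mem' V a) r s

theorem padEquiv (hB : ∀ j, α j ≤ B) :
    Nonempty (Q.InvRing K l α ≃ₐ[K] PInvRing Q K B l α) := by
  refine corrEquiv _ _ (fun v X => X.1 = pad Q K B α v.1) ?_ ?_ ?_ ?_
  · intro v
    exact ⟨⟨_, (pad_mem hB v.1).2 v.2⟩, rfl⟩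
  · intro X
    refine ⟨⟨unpad Q K B α X.1, ?_⟩, (pad_unpad X.1 X.2.1).symm⟩
    rw [← pad_mem hB, pad_unpad X.1 X.2.1]
    exact X.2
  · rintro f ⟨hf1, hf2⟩
    have hf1 : f ∈ Q.fnRing K α (Q.MomentFiber K l α) := hf1
    rw [coords_eq] at hf1
    obtain ⟨f', hf', hff⟩ := adjoin_transfer _ (Algebra.adjoin K (PCoord Q K B l α))
      (fun (v : Q.MomentFiber K l α) (X : PFib Q K B l α) => X.1 = pad Q K B α v.1) (by
        rintro _ ⟨⟨a, r, s⟩, rfl⟩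
        refine ⟨fun X => unpad Q K B α X.1 a r s, ?_, ?_⟩
        · exact unpad_entry a r s
        · intro v X h
          simp only
          rw [h, unpad_pad hB]) f hf1
    refine ⟨f', ⟨hf', ?_⟩, hff⟩
    intro X Y hXY
    have hm : ∀ X : PFib Q K B l α, unpad Q K B α X.1 ∈ Q.MomentFiber K l α := by
      intro X
      rw [← pad_mem hB, pad_unpad X.1 X.2.1]
      exact X.2
    rw [← hff ⟨_, hm X⟩ X (pad_unpad X.1 X.2.1).symm,
      ← hff ⟨_, hm Y⟩ Y (pad_unpad Y.1 Y.2.1).symm]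
    apply hf2
    rw [orb_pad hB, pad_unpad X.1 X.2.1, pad_unpad Y.1 Y.2.1]
    exact hXY
  · rintro f ⟨hf1, hf2⟩
    obtain ⟨f', hf', hff⟩ := adjoin_transfer _ (Q.fnRing K α (Q.MomentFiber K l α))
      (fun (X : PFib Q K B l α) (v : Q.MomentFiber K l α) => X.1 = pad Q K B α v.1) (by
        rintro _ ⟨⟨a, r, s⟩, rfl⟩
        refine ⟨fun v => pad Q K B α v.1 a r s, ?_, ?_⟩
        · exact pad_entry _ a r s
        · intro v X h
          simp only
          rw [h]) f hf1
    refine ⟨f', ⟨hf', ?_⟩, fun v X h => (hff X v h).symm⟩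
    intro v w hvw
    rw [← hff ⟨_, (pad_mem hB v.1).2 v.2⟩ v rfl, ← hff ⟨_, (pad_mem hB w.1).2 w.2⟩ w rfl]
    apply hf2
    exact (orb_pad hB _ _).1 hvw

end RF

namespace RF
open Matrix
set_option linter.unusedSectionVars false

theorem complement_factor {K S : Type} [Field K] [CharZero K] [Fintype S] [DecidableEq S]
    {B n N : ℕ} (hn : n ≤ B) (P : Matrix (Fin B) S K) (R : Matrix S (Fin B) K) (F : Matrix S S K)
    (c : K) (hc : c ≠ 0) (hF : F * F = F) (hPR : P * R = c • Em K B n)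
    (hEP : Em K B n * P = P) (hFR : F * R = R) (hPF : P * F = P) (htr : F.trace = N) :
    ∃ n', n' + n = N ∧ (n' ≤ B → ∃ (P' : Matrix (Fin B) S K) (R' : Matrix S (Fin B) K),
      P' * R' = (-c) • Em K B n' ∧ Em K B n' * P' = P' ∧ R' * Em K B n' = R' ∧
      F * R' = R' ∧ P' * F = P' ∧ R' * P' = R * P - c • F) := by
  set T : Matrix S S K := F - c⁻¹ • (R * P) with hT
  have hRPRP : (R * P) * (R * P) = c • (R * P) := by
    calc (R * P) * (R * P) = R * ((P * R) * P) := by simp only [Matrix.mul_assoc]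
      _ = _ := by rw [hPR, Matrix.smul_mul, hEP, Matrix.mul_smul]
  have hFRP : F * (R * P) = R * P := by rw [← Matrix.mul_assoc, hFR]
  have hRPF : (R * P) * F = R * P := by rw [Matrix.mul_assoc, hPF]
  have hTT : T * T = T := by
    rw [hT, Matrix.sub_mul, Matrix.mul_sub, Matrix.mul_sub, hF, Matrix.mul_smul, hFRP,
      Matrix.smul_mul, Matrix.smul_mul, hRPF, Matrix.mul_smul, hRPRP, smul_smul c⁻¹ c,
      inv_mul_cancel₀ hc, one_smul, sub_self, sub_zero]
  have hFT : F * T = T := by rw [hT, Matrix.mul_sub, hF, Matrix.mul_smul, hFRP]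
  have hTF : T * F = T := by rw [hT, Matrix.sub_mul, hF, Matrix.smul_mul, hRPF]
  obtain ⟨r, u, w, huw, hwu⟩ := idem_factor T hTT
  have hTu : T * u = u := by rw [← huw, Matrix.mul_assoc, hwu, Matrix.mul_one]
  have hwT : w * T = w := by rw [← huw, ← Matrix.mul_assoc, hwu, Matrix.one_mul]
  have hFu : F * u = u := by rw [← hTu, ← Matrix.mul_assoc, hFT]
  have hwF : w * F = w := by rw [← hwT, Matrix.mul_assoc, hTF]
  refine ⟨r, ?_, fun hr => ?_⟩
  · have h1 : T.trace = r := by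
      rw [← huw, Matrix.trace_mul_comm, hwu]; simp
    have h2 : T.trace = N - n := by
      rw [hT, Matrix.trace_sub, htr, Matrix.trace_smul, Matrix.trace_mul_comm, hPR,
        Matrix.trace_smul, trace_Em hn, smul_smul, inv_mul_cancel₀ hc, one_smul]
    have : ((r + n : ℕ) : K) = N := by
      push_cast; rw [← h1, h2]; ring
    exact_mod_cast this
  · refine ⟨Jm K B r * w, (-c) • (u * (Jm K B r)ᵀ), ?_, ?_, ?_, ?_, ?_, ?_⟩
    · rw [Matrix.mul_smul]
      congr 1
      calc _ = Jm K B r * (w * u) * (Jm K B r)ᵀ := by simp only [Matrix.mul_assoc]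
        _ = _ := by rw [hwu, Matrix.mul_one, J_mul_Jt]
    · rw [← Matrix.mul_assoc, Em_mul_J hr]
    · rw [Matrix.smul_mul, Matrix.mul_assoc, Jt_mul_Em hr]
    · rw [Matrix.mul_smul, ← Matrix.mul_assoc, hFu]
    · rw [Matrix.mul_assoc, hwF]
    · have : u * (Jm K B r)ᵀ * (Jm K B r * w) = T := by
        calc _ = u * ((Jm K B r)ᵀ * Jm K B r) * w := by simp only [Matrix.mul_assoc]
          _ = _ := by rw [Jt_mul_J hr, Matrix.mul_one, huw]
      rw [Matrix.smul_mul, this, hT, smul_sub, smul_smul, neg_mul, mul_inv_cancel₀ hc]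
      simp only [neg_smul, one_smul]
      abel

variable {Q : FinQuiver} [DecidableEq Q.A] {K : Type} [Field K]
variable {B : ℕ} {l l' : Q.I → K} {α α' : Q.I → ℕ} {i : Q.I}

/-- Combinatorial data of one admissible reflection. -/
structure RData (i : Q.I) (l l' : Q.I → K) (α α' : Q.I → ℕ) : Prop where
  li : l i ≠ 0
  lf : ∀ a : Q.DA, Q.dh a = i → Q.dt a ≠ i
  hα : ∀ j, j ≠ i → α' j = α j
  hαi : α' i + α i = ∑ a : Q.DA, if Q.dh a = i then α (Q.dt a) else 0
  hli : l' i = - l i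
  hl : ∀ j, j ≠ i → l' j = l j + (∑ a : Q.DA, if Q.dh a = j ∧ Q.dt a = i then 1 else 0) * l i

theorem RData.symm (D : RData i l l' α α') : RData i l' l α' α where
  li := by rw [D.hli]; exact neg_ne_zero.2 D.li
  lf := D.lf
  hα j hj := (D.hα j hj).symm
  hαi := by
    rw [add_comm, D.hαi]
    refine Finset.sum_congr rfl fun a _ => ?_
    by_cases h : Q.dh a = i
    · simp [h, D.hα _ (D.lf a h)]
    · simp [h]
  hli := by rw [D.hli]; ring
  hl j hj := by rw [D.hl j hj, D.hli]; ring

/-- The map into the vertex `i`. -/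
def Pm (i : Q.I) (X : PRep Q K B) : Matrix (Fin B) (Q.DA × Fin B) K :=
  Matrix.of fun k z => if Q.dh z.1 = i then eps Q K z.1 * X z.1 k z.2 else 0

/-- The map out of the vertex `i`. -/
def Rm (i : Q.I) (X : PRep Q K B) : Matrix (Q.DA × Fin B) (Fin B) K :=
  Matrix.of fun z k => if Q.dh z.1 = i then X (star Q z.1) z.2 k else 0

/-- Blocks of the composite through the vertex `i`. -/
def bl (X : PRep Q K B) (d e : Q.DA) : Matrix (Fin B) (Fin B) K :=
  eps Q K e • (X (star Q d) * X e)

/-- Projection to the sum of the spaces at the neighbours of `i`. -/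
def Fm (K : Type) [Field K] (B : ℕ) (i : Q.I) (α : Q.I → ℕ) :
    Matrix (Q.DA × Fin B) (Q.DA × Fin B) K :=
  Matrix.diagonal fun z => if Q.dh z.1 = i then Em K B (α (Q.dt z.1)) z.2 z.2 else 0

theorem Pm_mul_Rm (X : PRep Q K B) : Pm i X * Rm i X = pmom Q K B X i := by
  ext r s
  rw [pmom, Matrix.mul_apply, Fintype.sum_prod_type, Matrix.sum_apply]
  refine Finset.sum_congr rfl fun d _ => ?_
  by_cases h : Q.dh d = i
  · simp [Pm, Rm, h, Matrix.mul_apply, Finset.mul_sum, mul_assoc]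
  · simp [Pm, Rm, h]

theorem Rm_mul_Pm (X : PRep Q K B) (d e : Q.DA) (r s : Fin B) :
    (Rm i X * Pm i X) (d, r) (e, s)
      = if Q.dh d = i ∧ Q.dh e = i then bl X d e r s else 0 := by
  rw [Matrix.mul_apply]
  by_cases h : Q.dh d = i
  · by_cases h' : Q.dh e = i
    · simp only [Rm, Pm, h, h', Matrix.of_apply, if_true, and_self, bl, Matrix.smul_apply,
        Matrix.mul_apply, smul_eq_mul, Finset.mul_sum]
      exact Finset.sum_congr rfl fun k _ => by ring
    · simp [Pm, h']
  · simp [Rm, h]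

theorem pmom_split (X : PRep Q K B) (j : Q.I) : pmom Q K B X j =
    (∑ a : Q.DA, if Q.dh a = j ∧ Q.dt a ≠ i then eps Q K a • (X a * X (star Q a)) else 0)
    - ∑ a : Q.DA, if Q.dh a = j ∧ Q.dt a = i then bl X (star Q a) (star Q a) else 0 := by
  rw [pmom, ← Finset.sum_sub_distrib]
  refine Finset.sum_congr rfl fun a _ => ?_
  by_cases h : Q.dh a = j <;> by_cases h' : Q.dt a = i <;> simp [h, h', bl]

theorem Em_entry (n : ℕ) (r s : Fin B) :
    Em K B n r s = if r = s then Em K B n r r else 0 := by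
  by_cases h : r = s <;> simp [Em, h]

theorem Fm_entry (d e : Q.DA) (r s : Fin B) : Fm K B i α (d, r) (e, s)
    = if Q.dh d = i ∧ d = e then Em K B (α (Q.dt d)) r s else 0 := by
  simp only [Fm, Matrix.diagonal_apply, Prod.mk.injEq]
  rw [Em_entry _ r s]
  by_cases h1 : d = e <;> by_cases h2 : r = s <;> by_cases h3 : Q.dh d = i <;> simp [h1, h2, h3]

theorem Fm_mul_Fm : Fm K B i α * Fm K B i α = (Fm K B i α : Matrix (Q.DA × Fin B) _ K) := by
  rw [Fm, Matrix.diagonal_mul_diagonal]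
  congr 1; ext z
  simp only [Em, Matrix.diagonal_apply_eq]
  split_ifs <;> simp

theorem trace_Fm (hB : ∀ j, α j ≤ B) : (Fm K B i α : Matrix (Q.DA × Fin B) _ K).trace
    = ((∑ a : Q.DA, if Q.dh a = i then α (Q.dt a) else 0 : ℕ) : K) := by
  rw [Fm, Matrix.trace_diagonal, Fintype.sum_prod_type]
  push_cast
  refine Finset.sum_congr rfl fun a _ => ?_
  by_cases h : Q.dh a = i
  · simp only [h, if_true]
    exact trace_Em (hB _)
  · simp [h]

theorem Fm_mul_Rm (X : PRep Q K B)
    (hX : ∀ a, Em K B (α (Q.dh a)) * X a = X a ∧ X a * Em K B (α (Q.dt a)) = X a) :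
    Fm K B i α * Rm i X = Rm i X := by
  ext ⟨d, r⟩ k
  rw [Fm, Matrix.diagonal_mul]
  by_cases h : Q.dh d = i
  · simp only [Rm, Matrix.of_apply, h, if_true]
    conv_rhs => rw [← (hX (star Q d)).1]
    rw [dh_star]
    simp only [Em, Matrix.diagonal_mul, Matrix.diagonal_apply_eq]
  · simp [Rm, h]

theorem Pm_mul_Fm (X : PRep Q K B)
    (hX : ∀ a, Em K B (α (Q.dh a)) * X a = X a ∧ X a * Em K B (α (Q.dt a)) = X a) :
    Pm i X * Fm K B i α = Pm i X := by
  ext k ⟨d, r⟩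
  rw [Fm, Matrix.mul_diagonal]
  by_cases h : Q.dh d = i
  · simp only [Pm, Matrix.of_apply, h, if_true]
    conv_rhs => rw [← (hX d).2]
    simp only [Em, Matrix.mul_diagonal, Matrix.diagonal_apply_eq, mul_assoc]
  · simp [Pm, h]

theorem Em_mul_Pm (X : PRep Q K B)
    (hX : ∀ a, Em K B (α (Q.dh a)) * X a = X a ∧ X a * Em K B (α (Q.dt a)) = X a) :
    Em K B (α i) * Pm i X = Pm i X := by
  ext k ⟨d, r⟩
  rw [Em, Matrix.diagonal_mul]
  by_cases h : Q.dh d = i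
  · simp only [Pm, Matrix.of_apply, h, if_true]
    conv_rhs => rw [← (hX d).1, h]
    simp only [Em, Matrix.diagonal_mul]
    ring
  · simp [Pm, h]

theorem Rm_mul_Em (X : PRep Q K B)
    (hX : ∀ a, Em K B (α (Q.dh a)) * X a = X a ∧ X a * Em K B (α (Q.dt a)) = X a) :
    Rm i X * Em K B (α i) = Rm i X := by
  ext ⟨d, r⟩ k
  rw [Em, Matrix.mul_diagonal]
  by_cases h : Q.dh d = i
  · simp only [Rm, Matrix.of_apply, h, if_true]
    conv_rhs => rw [← (hX (star Q d)).2, dt_star, h]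
    simp only [Em, Matrix.mul_diagonal]
  · simp [Rm, h]

/-- The correspondence between the two fibres. -/
def Corr (i : Q.I) (l : Q.I → K) (α : Q.I → ℕ) (X X' : PRep Q K B) : Prop :=
  (∀ a, Q.dh a ≠ i → Q.dt a ≠ i → X a = X' a) ∧
  ∀ d e, Q.dh d = i → Q.dh e = i →
    bl X d e - bl X' d e = if d = e then l i • Em K B (α (Q.dt d)) else 0

theorem Corr.symm (D : RData i l l' α α') {X X' : PRep Q K B} (h : Corr i l α X X') :
    Corr i l' α' X' X := by
  refine ⟨fun a h1 h2 => (h.1 a h1 h2).symm, fun d e hd he => ?_⟩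
  rw [← neg_sub, h.2 d e hd he, D.hli, D.hα _ (D.lf d hd)]
  split_ifs <;> simp

theorem exists_compl [CharZero K] (hB : ∀ j, α j ≤ B) (hl : l i ≠ 0)
    {X : PRep Q K B} (hX : X ∈ PFib Q K B l α) :
    ∃ n', n' + α i = (∑ a : Q.DA, if Q.dh a = i then α (Q.dt a) else 0) ∧
      (n' ≤ B → ∃ (P' : Matrix (Fin B) (Q.DA × Fin B) K) (R' : Matrix (Q.DA × Fin B) (Fin B) K),
      P' * R' = (-l i) • Em K B n' ∧ Em K B n' * P' = P' ∧ R' * Em K B n' = R' ∧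
      Fm K B i α * R' = R' ∧ P' * Fm K B i α = P' ∧
      R' * P' = Rm i X * Pm i X - l i • Fm K B i α) :=
  complement_factor (hB i) (Pm i X) (Rm i X) (Fm K B i α) (l i) hl Fm_mul_Fm
    (by rw [Pm_mul_Rm, hX.2 i]) (Em_mul_Pm X hX.1) (Fm_mul_Rm X hX.1)
    (Pm_mul_Fm X hX.1) (trace_Fm hB)

end RF

namespace RF
open Matrix
set_option linter.unusedSectionVars false

variable {Q : FinQuiver} [DecidableEq Q.A] {K : Type} [Field K]
variable {B : ℕ} {l l' : Q.I → K} {α α' : Q.I → ℕ} {i : Q.I}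

/-- The representation with given maps into and out of the vertex `i`. -/
def build (i : Q.I) (X : PRep Q K B) (P : Matrix (Fin B) (Q.DA × Fin B) K)
    (R : Matrix (Q.DA × Fin B) (Fin B) K) : PRep Q K B := fun a =>
  if Q.dh a = i then eps Q K a • P.submatrix id (fun s => (a, s))
  else if Q.dt a = i then R.submatrix (fun r => (star Q a, r)) id
  else X a

theorem Pm_build (X : PRep Q K B) (P : Matrix (Fin B) (Q.DA × Fin B) K)
    (R : Matrix (Q.DA × Fin B) (Fin B) K) (hP : P * Fm K B i α = P) :
    Pm i (build i X P R) = P := by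
  ext k ⟨d, s⟩
  by_cases h : Q.dh d = i
  · simp [Pm, build, h, ← mul_assoc]
  · rw [← hP, Fm, Matrix.mul_diagonal]
    simp [Pm, h]

theorem Rm_build (lf : ∀ a : Q.DA, Q.dh a = i → Q.dt a ≠ i) (X : PRep Q K B)
    (P : Matrix (Fin B) (Q.DA × Fin B) K)
    (R : Matrix (Q.DA × Fin B) (Fin B) K) (hR : Fm K B i α * R = R) :
    Rm i (build i X P R) = R := by
  ext ⟨d, s⟩ k
  by_cases h : Q.dh d = i
  · simp [Rm, build, h, lf d h]
  · rw [← hR, Fm, Matrix.diagonal_mul]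
    simp [Rm, h]

theorem total [CharZero K] (D : RData i l l' α α') (hB : ∀ j, α j ≤ B) (hB' : ∀ j, α' j ≤ B)
    {X : PRep Q K B} (hX : X ∈ PFib Q K B l α) :
    ∃ X' ∈ PFib Q K B l' α', Corr i l α X X' := by
  obtain ⟨n', hn', h⟩ := exists_compl (i := i) hB D.li hX
  have hn : n' = α' i := by have := D.hαi; omega
  subst hn
  obtain ⟨P, R, hPR, hEP, hRE, hFR, hPF, hRP⟩ := h (hB' i)
  have hPm := Pm_build X P R hPF
  have hRm := Rm_build D.lf X P R hFR
  set X' := build i X P R with hX'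
  have hoff : ∀ a, Q.dh a ≠ i → Q.dt a ≠ i → X' a = X a := by
    intro a h1 h2; simp [hX', build, h1, h2]
  have hbl : ∀ d e, Q.dh d = i → Q.dh e = i →
      bl X d e - bl X' d e = if d = e then l i • Em K B (α (Q.dt d)) else 0 := by
    intro d e hd he
    ext r s
    have h1 := Rm_mul_Pm (i := i) X' d e r s
    have h2 := Rm_mul_Pm (i := i) X d e r s
    rw [hPm, hRm, hRP, Matrix.sub_apply, Matrix.smul_apply, Fm_entry, h2] at h1
    simp only [hd, he, and_self, if_true, true_and] at h1
    rw [Matrix.sub_apply, ← h1]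
    by_cases hde : d = e <;> simp [hde]
  refine ⟨X', ⟨?_, ?_⟩, fun a h1 h2 => (hoff a h1 h2).symm, hbl⟩
  · intro a
    by_cases h1 : Q.dh a = i
    · have e1 : X' a = eps Q K a • P.submatrix id (fun s => (a, s)) := by simp [hX', build, h1]
      rw [e1, h1, D.hα _ (D.lf a h1)]
      constructor
      · rw [Matrix.mul_smul]
        congr 1
        ext k s
        conv_rhs => rw [← hEP]
        simp [Em, Matrix.diagonal_mul]
      · rw [Matrix.smul_mul]
        congr 1
        ext k s
        conv_rhs => rw [← hPF]
        simp [Em, Matrix.mul_diagonal, Fm, h1]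
    · by_cases h2 : Q.dt a = i
      · have e1 : X' a = R.submatrix (fun r => (star Q a, r)) id := by simp [hX', build, h1, h2]
        rw [e1, h2, D.hα _ h1]
        constructor
        · ext k s
          conv_rhs => rw [← hFR]
          simp [Em, Matrix.diagonal_mul, Fm, h2]
        · ext k s
          conv_rhs => rw [← hRE]
          simp [Em, Matrix.mul_diagonal]
      · rw [hoff a h1 h2, D.hα _ h1, D.hα _ h2]
        exact hX.1 a
  · intro j
    by_cases hj : j = i
    · subst hj
      rw [← Pm_mul_Rm, hPm, hRm, hPR, D.hli]
    · have hm := hX.2 j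
      rw [pmom_split (i := i)] at hm ⊢
      have s1 : (∑ a : Q.DA, if Q.dh a = j ∧ Q.dt a ≠ i then
          eps Q K a • (X' a * X' (star Q a)) else 0)
          = ∑ a : Q.DA, if Q.dh a = j ∧ Q.dt a ≠ i then
          eps Q K a • (X a * X (star Q a)) else 0 := by
        refine Finset.sum_congr rfl fun a _ => ?_
        by_cases h : Q.dh a = j ∧ Q.dt a ≠ i
        · have h1 : Q.dh a ≠ i := h.1 ▸ hj
          rw [if_pos h, if_pos h, hoff a h1 h.2, hoff (star Q a) (by simpa using h.2)
            (by simpa using h1)]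
        · rw [if_neg h, if_neg h]
      have s2 : (∑ a : Q.DA, if Q.dh a = j ∧ Q.dt a = i then
          bl X' (star Q a) (star Q a) else 0)
          = (∑ a : Q.DA, if Q.dh a = j ∧ Q.dt a = i then bl X (star Q a) (star Q a) else 0)
          - ((∑ a : Q.DA, if Q.dh a = j ∧ Q.dt a = i then (1 : K) else 0) * l i)
            • Em K B (α j) := by
        rw [Finset.sum_mul, Finset.sum_smul, ← Finset.sum_sub_distrib]
        refine Finset.sum_congr rfl fun a _ => ?_
        by_cases h : Q.dh a = j ∧ Q.dt a = i
        · have h3 := hbl (star Q a) (star Q a) (by simpa using h.2) (by simpa using h.2)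
          simp only [if_true, dt_star, h.1] at h3
          rw [if_pos h, if_pos h, if_pos h, one_mul, ← h3]
          abel
        · simp [h]
      rw [s1, s2, D.hl j hj, D.hα j hj, add_smul, ← hm]
      abel

/-- The action on padded representations. -/
def pact (g h : Q.I → Matrix (Fin B) (Fin B) K) (X : PRep Q K B) : PRep Q K B :=
  fun a => g (Q.dh a) * X a * h (Q.dt a)

theorem pact_mem {g h : Q.I → Matrix (Fin B) (Fin B) K} (H : PInv Q K B α g h) {X : PRep Q K B}
    (hX : X ∈ PFib Q K B l α) : pact g h X ∈ PFib Q K B l α := by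
  refine ⟨fun a => ⟨?_, ?_⟩, fun j => ?_⟩
  · simp only [pact, ← Matrix.mul_assoc, H.Eg]
  · simp only [pact, Matrix.mul_assoc, H.hE]
  · have : pmom Q K B (pact g h X) j = g j * pmom Q K B X j * h j := by
      rw [pmom, pmom, Matrix.mul_sum, Matrix.sum_mul]
      refine Finset.sum_congr rfl fun a _ => ?_
      by_cases hj : Q.dh a = j
      · subst hj
        rw [if_pos rfl, if_pos rfl, Matrix.mul_smul, Matrix.smul_mul]
        congr 1
        simp only [pact, dh_star, dt_star]
        calc _ = g (Q.dh a) * (X a * (h (Q.dt a) * g (Q.dt a))) * X (star Q a) * h (Q.dh a) := by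
              simp only [Matrix.mul_assoc]
          _ = _ := by rw [H.hg, (hX.1 a).2]; simp only [Matrix.mul_assoc]
      · simp [hj]
    rw [this, hX.2 j, Matrix.mul_smul, H.gE, Matrix.smul_mul, H.gh]

theorem bl_pact {g h : Q.I → Matrix (Fin B) (Fin B) K} (H : PInv Q K B α g h) {X : PRep Q K B}
    (hX : X ∈ PFib Q K B l α) (d e : Q.DA) (hd : Q.dh d = i) (he : Q.dh e = i) :
    bl (pact g h X) d e = g (Q.dt d) * bl X d e * h (Q.dt e) := by
  rw [bl, bl, Matrix.mul_smul, Matrix.smul_mul]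
  congr 1
  simp only [pact, dh_star, dt_star, hd, he]
  have := (hX.1 (star Q d)).2
  rw [dt_star, hd] at this
  calc _ = g (Q.dt d) * (X (star Q d) * (h i * g i)) * X e * h (Q.dt e) := by
        simp only [Matrix.mul_assoc]
    _ = _ := by rw [H.hg, this]; simp only [Matrix.mul_assoc]

theorem equivariant (D : RData i l l' α α') {X X' Y' : PRep Q K B}
    (hX : X ∈ PFib Q K B l α) (hX' : X' ∈ PFib Q K B l' α') (hC : Corr i l α X X')
    (hY : POrb Q K B α' X' Y') :
    ∃ Y ∈ PFib Q K B l α, POrb Q K B α X Y ∧ Corr i l α Y Y' := by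
  obtain ⟨g', h', H', hY⟩ := hY
  have hY : Y' = pact g' h' X' := funext hY
  subst hY
  let g : Q.I → Matrix (Fin B) (Fin B) K := fun j => if j = i then Em K B (α i) else g' j
  let h : Q.I → Matrix (Fin B) (Fin B) K := fun j => if j = i then Em K B (α i) else h' j
  have hg : ∀ j, j ≠ i → g j = g' j := fun j hj => if_neg hj
  have hh : ∀ j, j ≠ i → h j = h' j := fun j hj => if_neg hj
  have hgi : g i = Em K B (α i) := if_pos rfl
  have hhi : h i = Em K B (α i) := if_pos rfl
  have H : PInv Q K B α g h := by
    constructor <;> intro j <;> by_cases hj : j = i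
    all_goals first
      | (subst hj; simp only [hgi, hhi, Em_mul_Em])
      | (simp only [hg j hj, hh j hj, ← D.hα j hj, H'.gh, H'.hg, H'.Eg, H'.gE, H'.Eh, H'.hE])
  refine ⟨pact g h X, pact_mem H hX, ⟨g, h, H, fun a => rfl⟩, ?_, ?_⟩
  · intro a h1 h2
    simp only [pact, hg _ h1, hh _ h2, hC.1 a h1 h2]
  · intro d e hd he
    rw [bl_pact H hX d e hd he, bl_pact H' hX' d e hd he, hg _ (D.lf d hd), hh _ (D.lf e he),
      ← Matrix.sub_mul, ← Matrix.mul_sub, hC.2 d e hd he]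
    by_cases hde : d = e
    · subst hde
      rw [if_pos rfl, Matrix.mul_smul, Matrix.smul_mul, ← D.hα _ (D.lf d hd),
        H'.gE, H'.gh]
    · simp [hde]

end RF

namespace RF
open Matrix
set_option linter.unusedSectionVars false

theorem det_mem {V K : Type} [Field K] (A : Subalgebra K (V → K)) {n : ℕ}
    (M : V → Matrix (Fin n) (Fin n) K) (hM : ∀ r s, (fun v => M v r s) ∈ A) :
    (fun v => (M v).det) ∈ A := by
  have : (fun v => (M v).det) = ∑ σ : Equiv.Perm (Fin n),
      algebraMap K (V → K) ((Equiv.Perm.sign σ : ℤ) : K) * ∏ k, (fun v => M v (σ k) k) := by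
    funext v
    simp [Matrix.det_apply', Finset.sum_apply, Finset.prod_apply]
  rw [this]
  exact A.sum_mem fun σ _ => A.mul_mem (A.algebraMap_mem _) (A.prod_mem fun k _ => hM _ _)

theorem adj_mem {V K : Type} [Field K] (A : Subalgebra K (V → K)) {n : ℕ}
    (M : V → Matrix (Fin n) (Fin n) K) (hM : ∀ r s, (fun v => M v r s) ∈ A) (r s : Fin n) :
    (fun v => (M v).adjugate r s) ∈ A := by
  simp only [Matrix.adjugate_apply]
  refine det_mem A _ fun r' s' => ?_
  by_cases h : r' = s
  · subst h
    simp only [Matrix.updateRow_self]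
    exact A.algebraMap_mem _
  · simp only [Matrix.updateRow_ne h]
    exact hM _ _

section pointwise
variable {K S : Type} [Field K] [Fintype S] [DecidableEq S] {B n : ℕ}

theorem minor_factor (P : Matrix (Fin B) S K) (R : Matrix S (Fin B) K)
    (hEP : Em K B n * P = P) {T U : Type} (σ : T → S) (τ : U → S) :
    (R * P).submatrix σ τ = ((R * Jm K B n).submatrix σ id) *
      (((Jm K B n)ᵀ * P).submatrix id τ) := by
  have : R * P = (R * Jm K B n) * ((Jm K B n)ᵀ * P) := by
    conv_lhs => rw [← hEP, ← J_mul_Jt]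
    simp only [Matrix.mul_assoc]
  rw [this]
  rfl

theorem sum_minor_det (hn : n ≤ B) (P : Matrix (Fin B) S K) (R : Matrix S (Fin B) K)
    (hEP : Em K B n * P = P) (c : K) (hPR : P * R = c • Em K B n) :
    ∑ σ : Fin n → S, ((R * P).submatrix σ σ).det = (n.factorial : K) * c ^ n := by
  have h := sum_minors n ((Jm K B n)ᵀ * P) (R * Jm K B n)
  have h1 : ((Jm K B n)ᵀ * P) * (R * Jm K B n) = c • 1 := by
    calc _ = (Jm K B n)ᵀ * (P * R) * Jm K B n := by simp only [Matrix.mul_assoc]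
      _ = _ := by rw [hPR, Matrix.mul_smul, Jt_mul_Em hn, Matrix.smul_mul, Jt_mul_J hn]
  rw [h1, Matrix.det_smul, Matrix.det_one, mul_one, Fintype.card_fin] at h
  rw [← h]
  refine Finset.sum_congr rfl fun σ _ => ?_
  rw [minor_factor P R hEP, Matrix.det_mul]

theorem gauge_pt (hn : n ≤ B) (P : Matrix (Fin B) S K) (R : Matrix S (Fin B) K)
    (hEP : Em K B n * P = P) (σ : Fin n → S) (hd : ((R * P).submatrix σ σ).det ≠ 0) :
    ∃ g h : Matrix (Fin B) (Fin B) K, g * h = Em K B n ∧ h * g = Em K B n ∧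
      Em K B n * g = g ∧ g * Em K B n = g ∧ Em K B n * h = h ∧ h * Em K B n = h ∧
      ((R * P).submatrix σ σ).det • (g * P)
        = Jm K B n * (((R * P).submatrix σ σ).adjugate * (R * P).submatrix σ id) ∧
      R * h = (R * P).submatrix id σ * (Jm K B n)ᵀ := by
  set J := Jm K B n with hJ
  have hJJ : Jᵀ * J = 1 := Jt_mul_J hn
  set ps := (Jᵀ * P).submatrix id σ with hps
  set rs := (R * J).submatrix σ id with hrs
  have hM : (R * P).submatrix σ σ = rs * ps := minor_factor P R hEP σ σ
  have hM1 : (R * P).submatrix σ id = rs * (Jᵀ * P) := by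
    rw [minor_factor P R hEP σ id]; rfl
  have hM2 : (R * P).submatrix id σ = (R * J) * ps := by
    rw [minor_factor P R hEP id σ]; rfl
  rw [hM, Matrix.det_mul] at hd
  have hu : IsUnit ps.det := isUnit_iff_ne_zero.2 (right_ne_zero_of_mul hd)
  have e1 : ps⁻¹ * ps = 1 := Matrix.nonsing_inv_mul ps hu
  have e2 : ps * ps⁻¹ = 1 := Matrix.mul_nonsing_inv ps hu
  have mm : ∀ x y : Matrix (Fin n) (Fin n) K, (J * x * Jᵀ) * (J * y * Jᵀ) = J * (x * y) * Jᵀ := by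
    intro x y
    calc _ = J * x * (Jᵀ * J) * y * Jᵀ := by simp only [Matrix.mul_assoc]
      _ = _ := by rw [hJJ, Matrix.mul_one]; simp only [Matrix.mul_assoc]
  have hE1 : ∀ x : Matrix (Fin n) (Fin n) K, Em K B n * (J * x * Jᵀ) = J * x * Jᵀ := by
    intro x; simp only [← Matrix.mul_assoc]; rw [Em_mul_J hn]
  have hE2 : ∀ x : Matrix (Fin n) (Fin n) K, (J * x * Jᵀ) * Em K B n = J * x * Jᵀ := by
    intro x; rw [Matrix.mul_assoc, Jt_mul_Em hn]
  refine ⟨J * ps⁻¹ * Jᵀ, J * ps * Jᵀ, ?_, ?_, hE1 _, hE2 _, hE1 _, hE2 _, ?_, ?_⟩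
  · rw [mm, e1, Matrix.mul_one, J_mul_Jt]
  · rw [mm, e2, Matrix.mul_one, J_mul_Jt]
  · rw [hM, hM1, Matrix.adjugate_mul_distrib, Matrix.det_mul]
    have e3 : ps.adjugate = ps.det • ps⁻¹ := by
      calc ps.adjugate = ps.adjugate * (ps * ps⁻¹) := by rw [e2, Matrix.mul_one]
        _ = _ := by rw [← Matrix.mul_assoc, Matrix.adjugate_mul, Matrix.smul_mul, Matrix.one_mul]
    have e4 : ps.adjugate * rs.adjugate * (rs * (Jᵀ * P))
        = (rs.det * ps.det) • (ps⁻¹ * (Jᵀ * P)) := by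
      calc _ = ps.adjugate * (rs.adjugate * rs) * (Jᵀ * P) := by simp only [Matrix.mul_assoc]
        _ = _ := by
          rw [Matrix.adjugate_mul, e3, Matrix.mul_smul, Matrix.mul_one, smul_smul,
            Matrix.smul_mul]
    rw [e4, Matrix.mul_smul]
    simp only [Matrix.mul_assoc]
  · rw [hM2]; simp only [Matrix.mul_assoc]

end pointwise

variable {Q : FinQuiver} [DecidableEq Q.A] {K : Type} [Field K]
variable {B : ℕ} {l l' : Q.I → K} {α α' : Q.I → ℕ} {i : Q.I}

theorem gauge (lf : ∀ a : Q.DA, Q.dh a = i → Q.dt a ≠ i) (hB : ∀ j, α j ≤ B)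
    {X : PRep Q K B} (hX : X ∈ PFib Q K B l α) (σ : Fin (α i) → Q.DA × Fin B)
    (hd : ((Rm i X * Pm i X).submatrix σ σ).det ≠ 0) :
    ∃ Y ∈ PFib Q K B l α, POrb Q K B α X Y ∧
      (∀ a, Q.dh a ≠ i → Q.dt a ≠ i → Y a = X a) ∧
      ((Rm i X * Pm i X).submatrix σ σ).det • Pm i Y = Jm K B (α i) *
        (((Rm i X * Pm i X).submatrix σ σ).adjugate * (Rm i X * Pm i X).submatrix σ id) ∧
      Rm i Y = (Rm i X * Pm i X).submatrix id σ * (Jm K B (α i))ᵀ := by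
  obtain ⟨g0, h0, a1, a2, a3, a4, a5, a6, a7, a8⟩ :=
    gauge_pt (hB i) (Pm i X) (Rm i X) (Em_mul_Pm X hX.1) σ hd
  let g : Q.I → Matrix (Fin B) (Fin B) K := fun j => if j = i then g0 else Em K B (α j)
  let h : Q.I → Matrix (Fin B) (Fin B) K := fun j => if j = i then h0 else Em K B (α j)
  have hg : ∀ j, j ≠ i → g j = Em K B (α j) := fun j hj => if_neg hj
  have hh : ∀ j, j ≠ i → h j = Em K B (α j) := fun j hj => if_neg hj
  have hgi : g i = g0 := if_pos rfl
  have hhi : h i = h0 := if_pos rfl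
  have H : PInv Q K B α g h := by
    constructor <;> intro j <;> by_cases hj : j = i
    all_goals first
      | (subst hj; simp only [hgi, hhi, a1, a2, a3, a4, a5, a6])
      | (simp only [hg j hj, hh j hj, Em_mul_Em])
  refine ⟨pact g h X, pact_mem H hX, ⟨g, h, H, fun a => rfl⟩, ?_, ?_, ?_⟩
  · intro a h1 h2
    simp only [pact, hg _ h1, hh _ h2]
    rw [(hX.1 a).1, (hX.1 a).2]
  · rw [← a7]
    congr 1
    ext k ⟨d, s⟩
    by_cases hdi : Q.dh d = i
    · have : pact g h X d = g0 * X d := by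
        simp only [pact, hdi, hgi, hh _ (lf d hdi)]
        rw [Matrix.mul_assoc, (hX.1 d).2]
      simp only [Pm, Matrix.of_apply, hdi, if_true, this, Matrix.mul_apply, Finset.mul_sum]
      exact Finset.sum_congr rfl fun x _ => by ring
    · simp [Pm, hdi, Matrix.mul_apply]
  · rw [← a8]
    ext ⟨d, s⟩ k
    by_cases hdi : Q.dh d = i
    · have : pact g h X (star Q d) = X (star Q d) * h0 := by
        simp only [pact, dh_star, dt_star, hdi, hhi, hg _ (lf d hdi)]
        have := (hX.1 (star Q d)).1
        rw [dh_star] at this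
        rw [this]
      simp only [Rm, Matrix.of_apply, hdi, if_true, this, Matrix.mul_apply]
    · simp [Rm, hdi, Matrix.mul_apply]

/-- Generators of the invariants under the group at the vertex `i`. -/
def Gens (B : ℕ) (l : Q.I → K) (α : Q.I → ℕ) (i : Q.I) : Set (PFib Q K B l α → K) :=
  {f | (∃ a r s, Q.dh a ≠ i ∧ Q.dt a ≠ i ∧ f = fun X => X.1 a r s) ∨
    ∃ d e r s, Q.dh d = i ∧ Q.dh e = i ∧ f = fun X => bl X.1 d e r s}

theorem M_mem (z w : Q.DA × Fin B) :
    (fun X : PFib Q K B l α => (Rm i X.1 * Pm i X.1) z w)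
      ∈ Algebra.adjoin K (Gens B l α i) := by
  obtain ⟨d, r⟩ := z
  obtain ⟨e, s⟩ := w
  by_cases h : Q.dh d = i ∧ Q.dh e = i
  · apply Algebra.subset_adjoin
    refine Or.inr ⟨d, e, r, s, h.1, h.2, ?_⟩
    funext X
    rw [Rm_mul_Pm, if_pos h]
  · have : (fun X : PFib Q K B l α => (Rm i X.1 * Pm i X.1) (d, r) (e, s)) = 0 := by
      funext X
      rw [Rm_mul_Pm, if_neg h]; rfl
    rw [this]
    exact Subalgebra.zero_mem _

theorem fft [CharZero K] (lf : ∀ a : Q.DA, Q.dh a = i → Q.dt a ≠ i) (hB : ∀ j, α j ≤ B)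
    (hl : l i ≠ 0) (f : PFib Q K B l α → K) (hf : f ∈ PInvRing Q K B l α) :
    f ∈ Algebra.adjoin K (Gens B l α i) := by
  set A := Algebra.adjoin K (Gens B l α i) with hA
  have hM : ∀ z w, (fun X : PFib Q K B l α => (Rm i X.1 * Pm i X.1) z w) ∈ A := M_mem
  let d : (Fin (α i) → Q.DA × Fin B) → PFib Q K B l α → K := fun σ X =>
    ((Rm i X.1 * Pm i X.1).submatrix σ σ).det
  have hdA : ∀ σ, d σ ∈ A := fun σ => det_mem A _ fun r s => hM _ _
  have hfac : ((α i).factorial : K) ≠ 0 := by exact_mod_cast (α i).factorial_ne_zero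
  refine glue A d hdA (((α i).factorial : K) * (l i) ^ (α i))
    (mul_ne_zero hfac (pow_ne_zero _ hl)) ?_ f ?_
  · intro X
    exact sum_minor_det (hB i) (Pm i X.1) (Rm i X.1) (Em_mul_Pm X.1 X.2.1) (l i)
      (by rw [Pm_mul_Rm, X.2.2 i])
  · intro σ
    have hex : ∀ X : PFib Q K B l α, ∃ Y : PFib Q K B l α, d σ X ≠ 0 →
      POrb Q K B α X.1 Y.1 ∧
      (∀ a, Q.dh a ≠ i → Q.dt a ≠ i → Y.1 a = X.1 a) ∧
      d σ X • Pm i Y.1 = Jm K B (α i) *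
        (((Rm i X.1 * Pm i X.1).submatrix σ σ).adjugate *
          (Rm i X.1 * Pm i X.1).submatrix σ id) ∧
      Rm i Y.1 = (Rm i X.1 * Pm i X.1).submatrix id σ * (Jm K B (α i))ᵀ := by
      intro X
      by_cases h : d σ X = 0
      · exact ⟨X, fun h' => absurd h h'⟩
      · obtain ⟨Y, hY, h2⟩ := gauge lf hB X.2 σ h
        exact ⟨⟨Y, hY⟩, fun _ => h2⟩
    choose φ hφ using hex
    refine local_descent (PCoord Q K B l α) A (d σ) (hdA σ) φ ?_ f hf.1 ?_
    · rintro _ ⟨⟨a, r, s⟩, rfl⟩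
      by_cases h1 : Q.dh a = i
      · refine ⟨1, fun X => eps Q K a * (Jm K B (α i) *
          (((Rm i X.1 * Pm i X.1).submatrix σ σ).adjugate *
          (Rm i X.1 * Pm i X.1).submatrix σ id)) r (a, s), ?_, ?_⟩
        · have : (fun X : PFib Q K B l α => eps Q K a * (Jm K B (α i) *
              (((Rm i X.1 * Pm i X.1).submatrix σ σ).adjugate *
              (Rm i X.1 * Pm i X.1).submatrix σ id)) r (a, s)) =
              eps Q K a • ∑ k, Jm K B (α i) r k • ∑ k',
                (fun X : PFib Q K B l α => ((Rm i X.1 * Pm i X.1).submatrix σ σ).adjugate k k') *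
                (fun X : PFib Q K B l α => (Rm i X.1 * Pm i X.1) (σ k') (a, s)) := by
            funext X
            simp only [Pi.smul_apply, Finset.sum_apply, Pi.mul_apply, smul_eq_mul]
            simp only [Matrix.mul_apply (M := Jm K B (α i)),
              Matrix.mul_apply (N := (Rm i X.1 * Pm i X.1).submatrix σ id),
              Matrix.submatrix_apply, id]
          rw [this]
          exact A.smul_mem (A.sum_mem fun k _ => A.smul_mem (A.sum_mem fun k' _ =>
            A.mul_mem (adj_mem A _ (fun r s => hM _ _) k k') (hM _ _)) _) _
        · intro X hX
          have e := congrFun (congrFun (hφ X hX).2.2.1 r) (a, s)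
          change d σ X ^ 1 * (φ X).1 a r s = eps Q K a * _
          rw [← e]
          simp only [pow_one, Matrix.smul_apply, Pm, Matrix.of_apply, h1, if_true, smul_eq_mul]
          linear_combination (-(d σ X * (φ X).1 a r s)) * eps_mul Q K a
      · by_cases h2 : Q.dt a = i
        · refine ⟨0, fun X => ((Rm i X.1 * Pm i X.1).submatrix id σ * (Jm K B (α i))ᵀ)
            (star Q a, r) s, ?_, ?_⟩
          · have : (fun X : PFib Q K B l α =>
                ((Rm i X.1 * Pm i X.1).submatrix id σ * (Jm K B (α i))ᵀ) (star Q a, r) s)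
                = ∑ k, Jm K B (α i) s k •
                (fun X : PFib Q K B l α => (Rm i X.1 * Pm i X.1) (star Q a, r) (σ k)) := by
              funext X
              simp only [Pi.smul_apply, Finset.sum_apply, smul_eq_mul]
              rw [Matrix.mul_apply]
              exact Finset.sum_congr rfl fun k _ => mul_comm _ _
            rw [this]
            exact A.sum_mem fun k _ => A.smul_mem (hM _ _) _
          · intro X hX
            have e := congrFun (congrFun (hφ X hX).2.2.2 (star Q a, r)) s
            change d σ X ^ 0 * (φ X).1 a r s = _
            refine Eq.trans ?_ e
            simp [Rm, h2]
        · refine ⟨0, fun X => X.1 a r s, Algebra.subset_adjoin (Or.inl ⟨a, r, s, h1, h2, rfl⟩), ?_⟩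
          intro X hX
          simp [(hφ X hX).2.1 a h1 h2]
    · intro X hX
      exact (hf.2 X (φ X) (hφ X hX).1).symm

end RF

namespace RF
open Matrix
set_option linter.unusedSectionVars false

variable {Q : FinQuiver} [DecidableEq Q.A] {K : Type} [Field K]
variable {B : ℕ} {l l' : Q.I → K} {α α' : Q.I → ℕ} {i : Q.I}

theorem bl_mem (d e : Q.DA) (r s : Fin B) :
    (fun X : PFib Q K B l α => bl X.1 d e r s) ∈ Algebra.adjoin K (PCoord Q K B l α) := by
  have : (fun X : PFib Q K B l α => bl X.1 d e r s) = eps Q K e • ∑ k,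
      (fun X : PFib Q K B l α => X.1 (star Q d) r k) * (fun X : PFib Q K B l α => X.1 e k s) := by
    funext X
    simp [bl, Matrix.mul_apply, Finset.sum_apply]
  rw [this]
  exact Subalgebra.smul_mem _ (Subalgebra.sum_mem _ fun k _ =>
    Subalgebra.mul_mem _ (coord_mem _ _ _) (coord_mem _ _ _)) _

theorem transfer [CharZero K] (D : RData i l l' α α') (hB : ∀ j, α j ≤ B) (hB' : ∀ j, α' j ≤ B)
    (f : PFib Q K B l α → K) (hf : f ∈ PInvRing Q K B l α) :
    ∃ f' ∈ PInvRing Q K B l' α', ∀ (X : PFib Q K B l α) (X' : PFib Q K B l' α'),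
      Corr i l α X.1 X'.1 → f X = f' X' := by
  obtain ⟨f', hf', hff⟩ := adjoin_transfer (Gens B l α i) (Algebra.adjoin K (PCoord Q K B l' α'))
    (fun (X : PFib Q K B l α) (X' : PFib Q K B l' α') => Corr i l α X.1 X'.1) (by
      rintro _ (⟨a, r, s, h1, h2, rfl⟩ | ⟨d, e, r, s, hd, he, rfl⟩)
      · refine ⟨_, coord_mem a r s, fun X X' h => ?_⟩
        change X.1 a r s = X'.1 a r s
        rw [h.1 a h1 h2]
      · refine ⟨(fun X' : PFib Q K B l' α' => bl X'.1 d e r s) + algebraMap K _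
          ((if d = e then l i • Em K B (α (Q.dt d)) else 0 : Matrix (Fin B) (Fin B) K) r s),
          Subalgebra.add_mem _ (bl_mem d e r s) (Subalgebra.algebraMap_mem _ _),
          fun X X' h => ?_⟩
        have e1 := congrFun (congrFun (h.2 d e hd he) r) s
        rw [Matrix.sub_apply] at e1
        change bl X.1 d e r s = bl X'.1 d e r s + _
        rw [← e1]
        change _ = bl X'.1 d e r s + (bl X.1 d e r s - bl X'.1 d e r s)
        ring) f (fft D.lf hB D.li f hf)
  refine ⟨f', ⟨hf', ?_⟩, hff⟩
  intro X' Y' hXY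
  obtain ⟨X, hX, hC⟩ := total D.symm hB' hB X'.2
  have hC := Corr.symm D.symm hC
  obtain ⟨Y, hY, hO, hCY⟩ := equivariant D hX X'.2 hC hXY
  rw [← hff ⟨X, hX⟩ X' hC, ← hff ⟨Y, hY⟩ Y' hCY]
  exact hf.2 ⟨X, hX⟩ ⟨Y, hY⟩ hO

theorem stepEquiv [CharZero K] (D : RData i l l' α α') :
    Nonempty (Q.InvRing K l α ≃ₐ[K] Q.InvRing K l' α') := by
  let B : ℕ := (∑ j, α j) + ∑ j, α' j
  have hB : ∀ j, α j ≤ B := fun j =>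
    (Finset.single_le_sum (f := α) (fun _ _ => Nat.zero_le _) (Finset.mem_univ j)).trans
      (Nat.le_add_right _ _)
  have hB' : ∀ j, α' j ≤ B := fun j =>
    (Finset.single_le_sum (f := α') (fun _ _ => Nat.zero_le _) (Finset.mem_univ j)).trans
      (Nat.le_add_left _ _)
  obtain ⟨e1⟩ := padEquiv (K := K) (l := l) hB
  obtain ⟨e2⟩ := padEquiv (K := K) (l := l') hB'
  have h : Nonempty (PInvRing Q K B l α ≃ₐ[K] PInvRing Q K B l' α') := by
    refine corrEquiv _ _ (fun X X' => Corr i l α X.1 X'.1) ?_ ?_ (transfer D hB hB') ?_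
    · intro X
      obtain ⟨X', h1, h2⟩ := total D hB hB' X.2
      exact ⟨⟨X', h1⟩, h2⟩
    · intro X'
      obtain ⟨X, h1, h2⟩ := total D.symm hB' hB X'.2
      exact ⟨⟨X, h1⟩, Corr.symm D.symm h2⟩
    · intro f' hf'
      obtain ⟨f, hf, h⟩ := transfer D.symm hB' hB f' hf'
      exact ⟨f, hf, fun X X' hC => (h X' X (Corr.symm D hC)).symm⟩
  obtain ⟨e⟩ := h
  exact ⟨(e1.trans e).trans e2.symm⟩

/-- Emptiness of the fibre when the reflected dimension would be negative. -/
theorem fibre_bound [CharZero K] (hl : l i ≠ 0) (v : Q.Rep K α) (hv : v ∈ Q.MomentFiber K l α) :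
    α i ≤ ∑ a : Q.DA, if Q.dh a = i then α (Q.dt a) else 0 := by
  have hB : ∀ j, α j ≤ ∑ j, α j := fun j =>
    Finset.single_le_sum (f := α) (fun _ _ => Nat.zero_le _) (Finset.mem_univ j)
  obtain ⟨n', h, -⟩ := exists_compl (i := i) hB hl ((pad_mem hB v).2 hv)
  omega

end RF

namespace RF
open Matrix
set_option linter.unusedSectionVars false

section combinatorics
variable {Q : FinQuiver} {i : Q.I}

/-- Reversal as an equivalence. -/
def starEquiv (Q : FinQuiver) : Q.DA ≃ Q.DA := ⟨star Q, star Q, star_star Q, star_star Q⟩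

theorem sum_star {M : Type} [AddCommMonoid M] (f : Q.DA → M) :
    ∑ d : Q.DA, f (star Q d) = ∑ d : Q.DA, f d := Equiv.sum_comp (starEquiv Q) f

theorem lf_dbl (lf : Q.Loopfree i) (a : Q.DA) (h : Q.dh a = i) : Q.dt a ≠ i := by
  rcases a with a | a
  · exact fun h' => lf a ⟨h, h'⟩
  · exact fun h' => lf a ⟨h', h⟩

theorem bil_ev (a : Q.I → ℤ) (i : Q.I) :
    Q.bil a (Q.ev i) = 2 * a i - ∑ d : Q.DA, if Q.dh d = i then a (Q.dt d) else 0 := by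
  rw [FinQuiver.bil, ← sum_star]
  simp [FinQuiver.ev]

theorem refl_ne (a : Q.I → ℤ) {j : Q.I} (h : j ≠ i) : Q.refl i a j = a j := by
  simp [FinQuiver.refl, FinQuiver.ev, h]

theorem refl_self (a : Q.I → ℤ) :
    Q.refl i a i = (∑ d : Q.DA, if Q.dh d = i then a (Q.dt d) else 0) - a i := by
  simp only [FinQuiver.refl, bil_ev, Pi.sub_apply, Pi.smul_apply, FinQuiver.ev, if_true,
    smul_eq_mul]
  ring

theorem coRefl_self {K : Type} [Field K] (lf : Q.Loopfree i) (l : Q.I → K) :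
    Q.coRefl K i l i = - l i := by
  have : Q.bil (Q.ev i) (Q.ev i) = 2 := by
    rw [bil_ev, Finset.sum_eq_zero]
    · simp [FinQuiver.ev]
    · intro d _
      by_cases h : Q.dh d = i
      · simp [h, FinQuiver.ev, lf_dbl lf d h]
      · simp [h]
  rw [FinQuiver.coRefl, this]
  push_cast
  ring

theorem coRefl_ne {K : Type} [Field K] (l : Q.I → K) {j : Q.I} (h : j ≠ i) :
    Q.coRefl K i l j
      = l j + (∑ a : Q.DA, if Q.dh a = j ∧ Q.dt a = i then 1 else 0) * l i := by
  have : Q.bil (Q.ev i) (Q.ev j)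
      = - ∑ a : Q.DA, if Q.dh a = j ∧ Q.dt a = i then 1 else 0 := by
    rw [bil_ev]
    simp [FinQuiver.ev, h, ite_and]
  rw [FinQuiver.coRefl, this]
  push_cast
  ring

end combinatorics

variable {Q : FinQuiver} {K : Type} [Field K]

/-- The dimension vector of natural numbers underlying an integer vector. -/
def nat (a : Q.I → ℤ) : Q.I → ℕ := fun j => (a j).toNat

/-- The points of the fibre, empty if the dimension vector is not nonnegative. -/
def ZV (x : (Q.I → K) × (Q.I → ℤ)) : Type :=
  {v : Q.MomentFiber K x.1 (nat x.2) // ∀ j, 0 ≤ x.2 j}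

/-- Restriction of functions. -/
def zres (x : (Q.I → K) × (Q.I → ℤ)) :
    (Q.MomentFiber K x.1 (nat x.2) → K) →ₐ[K] (ZV x → K) where
  toFun f := fun v => f v.1
  map_one' := rfl
  map_mul' _ _ := rfl
  map_zero' := rfl
  map_add' _ _ := rfl
  commutes' _ := rfl

/-- The ring attached to a pair with integer dimension vector. -/
def ZR (x : (Q.I → K) × (Q.I → ℤ)) : Subalgebra K (ZV x → K) :=
  (Q.InvRing K x.1 (nat x.2)).map (zres x)

theorem ZR_equiv (x : (Q.I → K) × (Q.I → ℤ)) (hx : ∀ j, 0 ≤ x.2 j) :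
    Nonempty (Q.InvRing K x.1 (nat x.2) ≃ₐ[K] ZR x) := by
  refine ⟨Subalgebra.equivMapOfInjective _ (zres x) ?_⟩
  intro f g h
  funext v
  exact congrFun h ⟨v, hx⟩

theorem ZR_empty (x y : (Q.I → K) × (Q.I → ℤ)) (hx : ZV x → False) (hy : ZV y → False) :
    Nonempty (ZR x ≃ₐ[K] ZR y) := by
  refine corrEquiv _ _ (fun _ _ => True) (fun v => (hx v).elim) (fun v => (hy v).elim) ?_ ?_
  · intro f _
    exact ⟨0, Subalgebra.zero_mem _, fun v => (hx v).elim⟩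
  · intro f _
    exact ⟨0, Subalgebra.zero_mem _, fun v => (hx v).elim⟩

theorem nat_sum (a : Q.I → ℤ) (ha : ∀ j, 0 ≤ a j) (i : Q.I) :
    ((∑ d : Q.DA, if Q.dh d = i then nat a (Q.dt d) else 0 : ℕ) : ℤ)
      = ∑ d : Q.DA, if Q.dh d = i then a (Q.dt d) else 0 := by
  push_cast
  refine Finset.sum_congr rfl fun d _ => ?_
  simp [nat, Int.toNat_of_nonneg (ha _)]

theorem ZV_bound [CharZero K] (x : (Q.I → K) × (Q.I → ℤ)) (i : Q.I) (hi : x.1 i ≠ 0)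
    (v : ZV x) : x.2 i ≤ ∑ d : Q.DA, if Q.dh d = i then x.2 (Q.dt d) else 0 := by
  classical
  have h := fibre_bound hi v.1.1 v.1.2
  have h' : ((nat x.2 i : ℕ) : ℤ) ≤ _ := Int.ofNat_le.2 h
  rw [nat_sum _ v.2] at h'
  simpa [nat, Int.toNat_of_nonneg (v.2 i)] using h'

theorem step_iso [CharZero K] (x y : (Q.I → K) × (Q.I → ℤ)) (h : Q.AdmStep K x y) :
    Nonempty (ZR x ≃ₐ[K] ZR y) := by
  classical
  obtain ⟨i, lf, hi, hl, ha⟩ := h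
  have hne : ∀ j, j ≠ i → y.2 j = x.2 j := fun j hj => by rw [ha, refl_ne _ hj]
  have hsum : (∑ d : Q.DA, if Q.dh d = i then y.2 (Q.dt d) else 0)
      = ∑ d : Q.DA, if Q.dh d = i then x.2 (Q.dt d) else 0 := by
    refine Finset.sum_congr rfl fun d _ => ?_
    by_cases h : Q.dh d = i
    · rw [if_pos h, if_pos h, hne _ (lf_dbl lf d h)]
    · rw [if_neg h, if_neg h]
  have hse : y.2 i = (∑ d : Q.DA, if Q.dh d = i then x.2 (Q.dt d) else 0) - x.2 i := by
    rw [ha, refl_self]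
  have hli : y.1 i = - x.1 i := by rw [hl, coRefl_self lf]
  have hyi : y.1 i ≠ 0 := by rw [hli]; exact neg_ne_zero.2 hi
  by_cases hx : ∀ j, 0 ≤ x.2 j
  · by_cases hy : ∀ j, 0 ≤ y.2 j
    · have D : RData i x.1 y.1 (nat x.2) (nat y.2) := by
        refine ⟨hi, lf_dbl lf, ?_, ?_, hli, ?_⟩
        · intro j hj
          simp only [nat, hne j hj]
        · zify
          have := nat_sum x.2 hx i
          push_cast at this
          rw [this]
          simp only [nat, Int.toNat_of_nonneg (hx i), Int.toNat_of_nonneg (hy i)]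
          rw [hse]; ring
        · intro j hj
          rw [hl, coRefl_ne _ hj]
      obtain ⟨e⟩ := stepEquiv D
      obtain ⟨e1⟩ := ZR_equiv x hx
      obtain ⟨e2⟩ := ZR_equiv y hy
      exact ⟨(e1.symm.trans e).trans e2⟩
    · refine ZR_empty x y (fun v => hy fun j => ?_) (fun v => hy v.2)
      by_cases hj : j = i
      · subst hj
        have := ZV_bound x j hi v
        omega
      · rw [hne j hj]; exact hx j
  · refine ZR_empty x y (fun v => hx v.2) (fun v => hx fun j => ?_)
    by_cases hj : j = i
    · subst hj
      have := ZV_bound y j hyi v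
      omega
    · rw [← hne j hj]; exact v.2 j

theorem eqv_iso [CharZero K] (x y : (Q.I → K) × (Q.I → ℤ)) (h : Q.AdmEquiv K x y) :
    Nonempty (ZR x ≃ₐ[K] ZR y) := by
  induction h with
  | rel x y h => exact step_iso x y h
  | refl x => exact ⟨AlgEquiv.refl⟩
  | symm x y _ ih => exact ih.map AlgEquiv.symm
  | trans x y z _ _ ih1 ih2 =>
    obtain ⟨e1⟩ := ih1
    obtain ⟨e2⟩ := ih2
    exact ⟨e1.trans e2⟩

theorem nat_toZ (α : Q.I → ℕ) : nat (Q.toZ α) = α := by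
  funext j; simp [nat, FinQuiver.toZ]

theorem ZR_toZ (l : Q.I → K) (α : Q.I → ℕ) :
    Nonempty (Q.InvRing K l α ≃ₐ[K] ZR (l, Q.toZ α)) := by
  have h := ZR_equiv (K := K) (l, Q.toZ α) (fun j => Int.natCast_nonneg _)
  simp only at h
  rw [nat_toZ] at h
  exact h

theorem final [CharZero K] (l ν : Q.I → K) (α β : Q.I → ℕ)
    (h : Q.AdmEquiv K (l, Q.toZ α) (ν, Q.toZ β)) :
    Nonempty (Q.InvRing K ν β ≃ₐ[K] Q.InvRing K l α) := by
  obtain ⟨e⟩ := eqv_iso _ _ h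
  obtain ⟨e1⟩ := ZR_toZ l α
  obtain ⟨e2⟩ := ZR_toZ ν β
  exact ⟨(e2.trans e.symm).trans e1.symm⟩

end RF

/-- if `(ν,β)` is obtained from `(λ,α)` by a sequence of admissible
reflections, then `N(ν,β) ≅ N(λ,α)` as varieties (isomorphic coordinate rings). -/
theorem stmt8 (Q : FinQuiver) (K : Type) [Field K] [CharZero K] [IsAlgClosed K]
    (l ν : Q.I → K) (α β : Q.I → ℕ)
    (h : Q.AdmEquiv K (l, Q.toZ α) (ν, Q.toZ β)) :
    Nonempty (Q.InvRing K ν β ≃ₐ[K] Q.InvRing K l α) := by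
  exact RF.final l ν α β h

end
end
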